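/- Let E be a finite quiver, R = P_k(Ē) and L = L_k(E). Then: (1) if N is a finite-dimensional left R-module with a composition series of length ℓ of which exactly r composition factors are isomorphic to modules in {coker(ν_i) : i ∈ E^0 not a sink}, then L ⊗_R N is a left L-module of finite length exactly ℓ − r; (2) every finitely presented left L-module M contains a finitely generated projective L-submodule P such that M/P has finite length; (3) every finitely presented left L-module of finite length is isomorphic to L ⊗_R N for some finite-dimensional left R-module N. -/

import Mathlib

namespace LPA

/-- A finite quiver: finite sets of vertices and arrows with source and target maps. -/
structure FinQuiver : Type 1 where
  V : Type
  A : Type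
  [fintypeV : Fintype V]
  [decEqV : DecidableEq V]
  [fintypeA : Fintype A]
  [decEqA : DecidableEq A]
  src : A → V
  tgt : A → V

attribute [instance] FinQuiver.fintypeV FinQuiver.decEqV FinQuiver.fintypeA FinQuiver.decEqA

/-- The inverse quiver: all arrows reversed. -/
def FinQuiver.rev (Q : FinQuiver) : FinQuiver where
  V := Q.V
  A := Q.A
  fintypeV := Q.fintypeV
  decEqV := Q.decEqV
  fintypeA := Q.fintypeA
  decEqA := Q.decEqA
  src := Q.tgt
  tgt := Q.src

/-- Generators of the path algebra: a trivial path `p v` for each vertex and an arrow `e` for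
each arrow. -/
inductive PathGen (Q : FinQuiver) : Type
  | vertex (v : Q.V) : PathGen Q
  | edge (e : Q.A) : PathGen Q

/-- Defining relations of the path algebra: the trivial paths are pairwise orthogonal
idempotents summing to `1`, and `p (src e) * e = e = e * p (tgt e)`. -/
inductive PathRel (k : Type) [CommRing k] (Q : FinQuiver) :
    FreeAlgebra k (PathGen Q) → FreeAlgebra k (PathGen Q) → Prop
  | vertex_mul_self (v : Q.V) :
      PathRel k Q (FreeAlgebra.ι k (PathGen.vertex v) * FreeAlgebra.ι k (PathGen.vertex v))
        (FreeAlgebra.ι k (PathGen.vertex v))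
  | vertex_mul_ne (v w : Q.V) (h : v ≠ w) :
      PathRel k Q (FreeAlgebra.ι k (PathGen.vertex v) * FreeAlgebra.ι k (PathGen.vertex w)) 0
  | sum_vertex :
      PathRel k Q (∑ v : Q.V, FreeAlgebra.ι k (PathGen.vertex v)) 1
  | src_mul (e : Q.A) :
      PathRel k Q
        (FreeAlgebra.ι k (PathGen.vertex (Q.src e)) * FreeAlgebra.ι k (PathGen.edge e))
        (FreeAlgebra.ι k (PathGen.edge e))
  | mul_tgt (e : Q.A) :
      PathRel k Q
        (FreeAlgebra.ι k (PathGen.edge e) * FreeAlgebra.ι k (PathGen.vertex (Q.tgt e)))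
        (FreeAlgebra.ι k (PathGen.edge e))

/-- The path algebra `P_k(Q)` of a finite quiver `Q`, presented by generators and relations. -/
def PathAlg (k : Type) [CommRing k] (Q : FinQuiver) : Type :=
  RingQuot (PathRel k Q)

variable (k : Type) [CommRing k] (Q : FinQuiver)

noncomputable instance : Ring (PathAlg k Q) :=
  inferInstanceAs (Ring (RingQuot (PathRel k Q)))

noncomputable instance : Algebra k (PathAlg k Q) :=
  inferInstanceAs (Algebra k (RingQuot (PathRel k Q)))

/-- The quotient map from the free algebra onto the path algebra. -/
noncomputable def PathAlg.mk : FreeAlgebra k (PathGen Q) →ₐ[k] PathAlg k Q :=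
  RingQuot.mkAlgHom k (PathRel k Q)

/-- The trivial path (vertex idempotent) `p v` in the path algebra. -/
noncomputable def PathAlg.p (v : Q.V) : PathAlg k Q :=
  PathAlg.mk k Q (FreeAlgebra.ι k (PathGen.vertex v))

/-- The arrow `e` in the path algebra. -/
noncomputable def PathAlg.arrow (e : Q.A) : PathAlg k Q :=
  PathAlg.mk k Q (FreeAlgebra.ι k (PathGen.edge e))

theorem PathAlg.mk_rel {x y : FreeAlgebra k (PathGen Q)} (h : PathRel k Q x y) :
    PathAlg.mk k Q x = PathAlg.mk k Q y :=
  RingQuot.mkAlgHom_rel k h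

theorem PathAlg.p_mul_self (v : Q.V) : PathAlg.p k Q v * PathAlg.p k Q v = PathAlg.p k Q v := by
  have h := PathAlg.mk_rel k Q (PathRel.vertex_mul_self v)
  simpa [map_mul, PathAlg.p] using h

theorem PathAlg.p_mul_ne (v w : Q.V) (hvw : v ≠ w) :
    PathAlg.p k Q v * PathAlg.p k Q w = 0 := by
  have h := PathAlg.mk_rel k Q (PathRel.vertex_mul_ne v w hvw)
  simpa [map_mul, PathAlg.p] using h

theorem PathAlg.sum_p : (∑ v : Q.V, PathAlg.p k Q v) = 1 := by
  have h := PathAlg.mk_rel k Q (PathRel.sum_vertex)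
  simpa [map_sum, PathAlg.p] using h

theorem PathAlg.arrow_mul_tgt (e : Q.A) :
    PathAlg.arrow k Q e * PathAlg.p k Q (Q.tgt e) = PathAlg.arrow k Q e := by
  have h := PathAlg.mk_rel k Q (PathRel.mul_tgt e)
  simpa [map_mul, PathAlg.p, PathAlg.arrow] using h

theorem PathAlg.src_mul_arrow (e : Q.A) :
    PathAlg.p k Q (Q.src e) * PathAlg.arrow k Q e = PathAlg.arrow k Q e := by
  have h := PathAlg.mk_rel k Q (PathRel.src_mul e)
  simpa [map_mul, PathAlg.p, PathAlg.arrow] using h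

/-- The set of vertices `{p v | v ∈ Q.V}` of the path algebra, as a finite set. -/
noncomputable def vertexFinset : Finset (PathAlg k Q) :=
  letI := Classical.decEq (PathAlg k Q)
  Finset.univ.image (PathAlg.p k Q)

end LPA

namespace LPA

/-- Generators of the Leavitt path algebra: vertex idempotents, arrows, and ghost arrows. -/
inductive LGen (Q : FinQuiver) : Type
  | vertex (v : Q.V) : LGen Q
  | edge (e : Q.A) : LGen Q
  | ghost (e : Q.A) : LGen Q

/-- Defining relations of the Leavitt path algebra `L_k(E)`: (V), (E1), (E2), (CK1), (CK2),
together with `∑ p_v = 1`. -/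
inductive LeavittRel (k : Type) [CommRing k] (Q : FinQuiver) :
    FreeAlgebra k (LGen Q) → FreeAlgebra k (LGen Q) → Prop
  | vertex_mul_self (v : Q.V) :
      LeavittRel k Q (FreeAlgebra.ι k (LGen.vertex v) * FreeAlgebra.ι k (LGen.vertex v))
        (FreeAlgebra.ι k (LGen.vertex v))
  | vertex_mul_ne (v w : Q.V) (h : v ≠ w) :
      LeavittRel k Q (FreeAlgebra.ι k (LGen.vertex v) * FreeAlgebra.ι k (LGen.vertex w)) 0
  | sum_vertex :
      LeavittRel k Q (∑ v : Q.V, FreeAlgebra.ι k (LGen.vertex v)) 1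
  | src_mul (e : Q.A) :
      LeavittRel k Q (FreeAlgebra.ι k (LGen.vertex (Q.src e)) * FreeAlgebra.ι k (LGen.edge e))
        (FreeAlgebra.ι k (LGen.edge e))
  | mul_tgt (e : Q.A) :
      LeavittRel k Q (FreeAlgebra.ι k (LGen.edge e) * FreeAlgebra.ι k (LGen.vertex (Q.tgt e)))
        (FreeAlgebra.ι k (LGen.edge e))
  | tgt_mul_ghost (e : Q.A) :
      LeavittRel k Q (FreeAlgebra.ι k (LGen.vertex (Q.tgt e)) * FreeAlgebra.ι k (LGen.ghost e))
        (FreeAlgebra.ι k (LGen.ghost e))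
  | ghost_mul_src (e : Q.A) :
      LeavittRel k Q (FreeAlgebra.ι k (LGen.ghost e) * FreeAlgebra.ι k (LGen.vertex (Q.src e)))
        (FreeAlgebra.ι k (LGen.ghost e))
  | ghost_mul_edge_self (e : Q.A) :
      LeavittRel k Q (FreeAlgebra.ι k (LGen.ghost e) * FreeAlgebra.ι k (LGen.edge e))
        (FreeAlgebra.ι k (LGen.vertex (Q.tgt e)))
  | ghost_mul_edge_ne (e f : Q.A) (h : e ≠ f) :
      LeavittRel k Q (FreeAlgebra.ι k (LGen.ghost e) * FreeAlgebra.ι k (LGen.edge f)) 0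
  | cuntz_krieger (v : Q.V) (h : ∃ e : Q.A, Q.src e = v) :
      LeavittRel k Q
        (∑ e ∈ Finset.univ.filter (fun e : Q.A => Q.src e = v),
          FreeAlgebra.ι k (LGen.edge e) * FreeAlgebra.ι k (LGen.ghost e))
        (FreeAlgebra.ι k (LGen.vertex v))

/-- The Leavitt path algebra `L_k(E)`. -/
def Leavitt (k : Type) [CommRing k] (Q : FinQuiver) : Type :=
  RingQuot (LeavittRel k Q)

variable (k : Type) [CommRing k] (Q : FinQuiver)

noncomputable instance : Ring (Leavitt k Q) :=
  inferInstanceAs (Ring (RingQuot (LeavittRel k Q)))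

noncomputable instance : Algebra k (Leavitt k Q) :=
  inferInstanceAs (Algebra k (RingQuot (LeavittRel k Q)))

/-- The quotient map from the free algebra onto the Leavitt path algebra. -/
noncomputable def Leavitt.mk : FreeAlgebra k (LGen Q) →ₐ[k] Leavitt k Q :=
  RingQuot.mkAlgHom k (LeavittRel k Q)

/-- The vertex idempotent `p v` in the Leavitt path algebra. -/
noncomputable def Leavitt.p (v : Q.V) : Leavitt k Q :=
  Leavitt.mk k Q (FreeAlgebra.ι k (LGen.vertex v))

/-- The arrow `e` in the Leavitt path algebra. -/
noncomputable def Leavitt.ed (e : Q.A) : Leavitt k Q :=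
  Leavitt.mk k Q (FreeAlgebra.ι k (LGen.edge e))

/-- The ghost arrow `ē` in the Leavitt path algebra. -/
noncomputable def Leavitt.gh (e : Q.A) : Leavitt k Q :=
  Leavitt.mk k Q (FreeAlgebra.ι k (LGen.ghost e))

theorem Leavitt.mk_rel {x y : FreeAlgebra k (LGen Q)} (h : LeavittRel k Q x y) :
    Leavitt.mk k Q x = Leavitt.mk k Q y :=
  RingQuot.mkAlgHom_rel k h

theorem Leavitt.p_mul_self (v : Q.V) : Leavitt.p k Q v * Leavitt.p k Q v = Leavitt.p k Q v := by
  have h := Leavitt.mk_rel k Q (LeavittRel.vertex_mul_self v)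
  simpa [map_mul, Leavitt.p] using h

theorem Leavitt.p_mul_ne (v w : Q.V) (hvw : v ≠ w) :
    Leavitt.p k Q v * Leavitt.p k Q w = 0 := by
  have h := Leavitt.mk_rel k Q (LeavittRel.vertex_mul_ne v w hvw)
  simpa [map_mul, Leavitt.p] using h

theorem Leavitt.sum_p : (∑ v : Q.V, Leavitt.p k Q v) = 1 := by
  have h := Leavitt.mk_rel k Q (LeavittRel.sum_vertex)
  simpa [map_sum, Leavitt.p] using h

theorem Leavitt.tgt_mul_gh (e : Q.A) :
    Leavitt.p k Q (Q.tgt e) * Leavitt.gh k Q e = Leavitt.gh k Q e := by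
  have h := Leavitt.mk_rel k Q (LeavittRel.tgt_mul_ghost e)
  simpa [map_mul, Leavitt.p, Leavitt.gh] using h

theorem Leavitt.gh_mul_src (e : Q.A) :
    Leavitt.gh k Q e * Leavitt.p k Q (Q.src e) = Leavitt.gh k Q e := by
  have h := Leavitt.mk_rel k Q (LeavittRel.ghost_mul_src e)
  simpa [map_mul, Leavitt.p, Leavitt.gh] using h

/-- The canonical embedding `P_k(Ē) → L_k(E)` of the path algebra of the inverse quiver into
the Leavitt path algebra, sending `p v ↦ p v` and each reversed arrow `ē ↦ ē`. -/
noncomputable def revToLeavitt : PathAlg k Q.rev →ₐ[k] Leavitt k Q :=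
  RingQuot.liftAlgHom k ⟨((FreeAlgebra.lift k fun g =>
    match g with
    | PathGen.vertex v => Leavitt.p k Q v
    | PathGen.edge e => Leavitt.gh k Q e : FreeAlgebra k (PathGen Q.rev) →ₐ[k] Leavitt k Q)), by
      intro x y h
      induction h with
      | vertex_mul_self v =>
          simp only [map_mul, FreeAlgebra.lift_ι_apply]
          exact Leavitt.p_mul_self k Q v
      | vertex_mul_ne v w h =>
          simp only [map_mul, map_zero, FreeAlgebra.lift_ι_apply]
          exact Leavitt.p_mul_ne k Q v w h
      | sum_vertex =>
          simp only [map_sum, map_one, FreeAlgebra.lift_ι_apply]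
          exact Leavitt.sum_p k Q
      | src_mul e =>
          simp only [map_mul, FreeAlgebra.lift_ι_apply]
          exact Leavitt.tgt_mul_gh k Q e
      | mul_tgt e =>
          simp only [map_mul, FreeAlgebra.lift_ι_apply]
          exact Leavitt.gh_mul_src k Q e⟩

/-- The canonical embedding `P_k(E) → L_k(E)` of the path algebra into the Leavitt path
algebra, sending `p v ↦ p v` and each arrow `e ↦ e`. -/
noncomputable def pathToLeavitt : PathAlg k Q →ₐ[k] Leavitt k Q :=
  RingQuot.liftAlgHom k ⟨((FreeAlgebra.lift k fun g =>
    match g with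
    | PathGen.vertex v => Leavitt.p k Q v
    | PathGen.edge e => Leavitt.ed k Q e : FreeAlgebra k (PathGen Q) →ₐ[k] Leavitt k Q)), by
      intro x y h
      induction h with
      | vertex_mul_self v =>
          simp only [map_mul, FreeAlgebra.lift_ι_apply]
          exact Leavitt.p_mul_self k Q v
      | vertex_mul_ne v w h =>
          simp only [map_mul, map_zero, FreeAlgebra.lift_ι_apply]
          exact Leavitt.p_mul_ne k Q v w h
      | sum_vertex =>
          simp only [map_sum, map_one, FreeAlgebra.lift_ι_apply]
          exact Leavitt.sum_p k Q
      | src_mul e =>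
          simp only [map_mul, FreeAlgebra.lift_ι_apply]
          have h := Leavitt.mk_rel k Q (LeavittRel.src_mul e)
          simpa [map_mul, Leavitt.p, Leavitt.ed] using h
      | mul_tgt e =>
          simp only [map_mul, FreeAlgebra.lift_ι_apply]
          have h := Leavitt.mk_rel k Q (LeavittRel.mul_tgt e)
          simpa [map_mul, Leavitt.p, Leavitt.ed] using h⟩

end LPA

namespace LPA

open TensorProduct

variable (P L : Type) [Ring P] [Ring L] (φ : P →+* L)

/-- The subgroup of relations defining the balanced tensor product `L ⊗_P M` (where `L` is a
right `P`-module via `φ` and `M` a left `P`-module) as a quotient of `L ⊗_ℤ M`. -/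
noncomputable def trel (M : Type) [AddCommGroup M] [Module P M] :
    Submodule L (TensorProduct ℤ L M) :=
  Submodule.span L
    {z | ∃ (l : L) (p : P) (m : M), z = (l * φ p) ⊗ₜ[ℤ] m - l ⊗ₜ[ℤ] (p • m)}

/-- The balanced tensor product `L ⊗_P M`, a left `L`-module. -/
abbrev TensorPhi (M : Type) [AddCommGroup M] [Module P M] : Type :=
  TensorProduct ℤ L M ⧸ trel P L φ M

/-- Functoriality of `L ⊗_P -` : the map induced on balanced tensor products by a `P`-linear
map `f : M → N`. -/
noncomputable def tmap {M N : Type} [AddCommGroup M] [Module P M] [AddCommGroup N]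
    [Module P N] (f : M →ₗ[P] N) : TensorPhi P L φ M →ₗ[L] TensorPhi P L φ N :=
  Submodule.mapQ _ _
    (TensorProduct.AlgebraTensorModule.map (LinearMap.id : L →ₗ[L] L)
      f.toAddMonoidHom.toIntLinearMap)
    (by
      refine Submodule.span_le.mpr ?_
      rintro z ⟨l, p, m, rfl⟩
      simp only [SetLike.mem_coe, Submodule.mem_comap, map_sub,
        TensorProduct.AlgebraTensorModule.map_tmul, LinearMap.id_coe, id_eq,
        AddMonoidHom.coe_toIntLinearMap, LinearMap.toAddMonoidHom_coe]
      exact Submodule.subset_span ⟨l, p, f m, by rw [f.map_smul]⟩)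

/-- `L` is flat as a right `P`-module (via `φ : P → L`): the functor `L ⊗_P -` preserves
injectivity. -/
def RightFlat : Prop :=
  ∀ (M N : Type) [AddCommGroup M] [Module P M] [AddCommGroup N] [Module P N],
    ∀ f : M →ₗ[P] N, Function.Injective f → Function.Injective (tmap P L φ f)

end LPA

namespace LPA

/-- Right multiplication by a fixed element, as an endomorphism of the left regular module. -/
noncomputable def rightMul (R : Type) [Ring R] (x : R) : R →ₗ[R] R where
  toFun y := y * x
  map_add' a b := add_mul a b x
  map_smul' r y := by simp [smul_eq_mul, mul_assoc]

variable (k : Type) [CommRing k] (Q : FinQuiver)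

/-- The principal left ideal `P_k(Ē)·p_v` of the path algebra of the inverse quiver. -/
noncomputable def pIdeal (v : Q.V) : Submodule (PathAlg k Q.rev) (PathAlg k Q.rev) :=
  LinearMap.range (rightMul (PathAlg k Q.rev) (PathAlg.p k Q.rev v))

/-- The principal left ideal `L_k(E)·p_v` of the Leavitt path algebra. -/
noncomputable def pIdealL (v : Q.V) : Submodule (Leavitt k Q) (Leavitt k Q) :=
  LinearMap.range (rightMul (Leavitt k Q) (Leavitt.p k Q v))

/-- A sink: a vertex emitting no arrows. -/
def IsSink (v : Q.V) : Prop := ∀ e : Q.A, Q.src e ≠ v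

/-- For a non-sink vertex `i` (and, degenerately, for a sink, where the domain is trivial),
the left `P_k(Ē)`-module homomorphism
`ν_i : ⊕_{e ∈ s⁻¹(i)} P_k(Ē)·p_{r(e)} → P_k(Ē)·p_i`, `(r_e) ↦ ∑ r_e·ē`. -/
noncomputable def nu (i : Q.V) :
    ((e : {e : Q.A // Q.src e = i}) → ↥(pIdeal k Q (Q.tgt e.1)))
      →ₗ[PathAlg k Q.rev] ↥(pIdeal k Q i) :=
  LinearMap.codRestrict (pIdeal k Q i)
    { toFun := fun x =>
        ∑ e : {e : Q.A // Q.src e = i}, ((x e : PathAlg k Q.rev) * PathAlg.arrow k Q.rev e.1)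
      map_add' := by
        intro a b
        simp [add_mul, Finset.sum_add_distrib]
      map_smul' := by
        intro r x
        simp [smul_eq_mul, Finset.mul_sum, mul_assoc] }
    (by
      intro x
      refine ⟨∑ e : {e : Q.A // Q.src e = i},
        ((x e : PathAlg k Q.rev) * PathAlg.arrow k Q.rev e.1), ?_⟩
      simp only [rightMul, LinearMap.coe_mk, AddHom.coe_mk, Finset.sum_mul]
      refine Finset.sum_congr rfl fun e _ => ?_
      obtain ⟨e, he⟩ := e
      subst he
      rw [mul_assoc]
      congr 1
      exact PathAlg.arrow_mul_tgt k Q.rev e)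

/-- The cokernel of `ν_i`, a finite-dimensional simple `P_k(Ē)`-module. -/
abbrev CokerNu (i : Q.V) : Type :=
  ↥(pIdeal k Q i) ⧸ LinearMap.range (nu k Q i)

/-- Reachability by a (possibly trivial) path in the quiver `E`. -/
inductive Reaches : Q.V → Q.V → Prop
  | refl (v : Q.V) : Reaches v v
  | step (e : Q.A) {w : Q.V} : Reaches (Q.tgt e) w → Reaches (Q.src e) w

end LPA

namespace LPA

/-- A composition series `0 = c 0 < c 1 < … < c ℓ = M` with simple factors. -/
def IsCompSeries {R M : Type} [Ring R] [AddCommGroup M] [Module R M] (ℓ : ℕ)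
    (c : Fin (ℓ + 1) → Submodule R M) : Prop :=
  c 0 = ⊥ ∧ c (Fin.last ℓ) = ⊤ ∧
    ∀ i : Fin ℓ, c i.castSucc < c i.succ ∧
      IsSimpleModule R
        (↥(c i.succ) ⧸ Submodule.comap (c i.succ).subtype (c i.castSucc))

/-- The `i`-th factor `c (i+1) / c i` of a series of submodules. -/
abbrev SeriesFactor {R M : Type} [Ring R] [AddCommGroup M] [Module R M] {ℓ : ℕ}
    (c : Fin (ℓ + 1) → Submodule R M) (i : Fin ℓ) : Type :=
  ↥(c i.succ) ⧸ Submodule.comap (c i.succ).subtype (c i.castSucc)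

end LPA

namespace LPA

/-- A module over a ring `R`, bundled with its structure. -/
structure ModuleOver (R : Type) [Ring R] : Type 1 where
  carrier : Type
  [acg : AddCommGroup carrier]
  [mod : Module R carrier]

attribute [instance] ModuleOver.acg ModuleOver.mod

/-- Finite-dimensionality over `k` of a bundled `R`-module, for a `k`-algebra `R` (the
`k`-structure being obtained by restriction of scalars). -/
def FinDimOver (k R : Type) [Field k] [Ring R] [Algebra k R] (X : ModuleOver R) : Prop :=
  letI : Module k X.carrier := Module.compHom X.carrier (algebraMap k R)
  FiniteDimensional k X.carrier

end LPA

namespace LPA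

open TensorProduct

section Basics

variable (k : Type) [Field k] (Q : FinQuiver)

/-- The path algebra of the inverse quiver. -/
abbrev RR : Type := PathAlg k Q.rev

/-- The canonical ring homomorphism to the Leavitt path algebra. -/
noncomputable def phi : RR k Q →+* Leavitt k Q := (revToLeavitt k Q).toRingHom

/-- Vertex idempotents of `RR`. -/
noncomputable def pp (v : Q.V) : RR k Q := PathAlg.p k Q.rev v

/-- Ghost arrows of `RR`. -/
noncomputable def ga (e : Q.A) : RR k Q := PathAlg.arrow k Q.rev e

theorem pp_self (v : Q.V) : pp k Q v * pp k Q v = pp k Q v := PathAlg.p_mul_self k Q.rev v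
theorem pp_ne {v w : Q.V} (h : v ≠ w) : pp k Q v * pp k Q w = 0 :=
  PathAlg.p_mul_ne k Q.rev v w h
theorem sum_pp : ∑ v : Q.V, pp k Q v = 1 := PathAlg.sum_p k Q.rev
theorem ga_src (e : Q.A) : ga k Q e * pp k Q (Q.src e) = ga k Q e :=
  PathAlg.arrow_mul_tgt k Q.rev e
theorem tgt_ga (e : Q.A) : pp k Q (Q.tgt e) * ga k Q e = ga k Q e :=
  PathAlg.src_mul_arrow k Q.rev e

theorem ga_src_ne (e : Q.A) {v : Q.V} (h : Q.src e ≠ v) : ga k Q e * pp k Q v = 0 := by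
  rw [← ga_src, mul_assoc, pp_ne k Q h, mul_zero]
theorem tgt_ga_ne (e : Q.A) {v : Q.V} (h : v ≠ Q.tgt e) : pp k Q v * ga k Q e = 0 := by
  rw [← tgt_ga, ← mul_assoc, pp_ne k Q h, zero_mul]

theorem phi_pp (v : Q.V) : phi k Q (pp k Q v) = Leavitt.p k Q v := by
  have : revToLeavitt k Q (RingQuot.mkAlgHom k (PathRel k Q.rev)
    (FreeAlgebra.ι k (PathGen.vertex v))) = Leavitt.p k Q v :=
    (RingQuot.liftAlgHom_mkAlgHom_apply k _ _ _).trans (FreeAlgebra.lift_ι_apply _ _)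
  exact this
theorem phi_ga (e : Q.A) : phi k Q (ga k Q e) = Leavitt.gh k Q e := by
  have : revToLeavitt k Q (RingQuot.mkAlgHom k (PathRel k Q.rev)
    (FreeAlgebra.ι k (PathGen.edge e))) = Leavitt.gh k Q e :=
    (RingQuot.liftAlgHom_mkAlgHom_apply k _ _ _).trans (FreeAlgebra.lift_ι_apply _ _)
  exact this
theorem phi_algebraMap (a : k) :
    phi k Q (algebraMap k (RR k Q) a) = algebraMap k (Leavitt k Q) a :=
  (revToLeavitt k Q).commutes a

variable {k Q}

/-- Induction for the path algebra of the inverse quiver. -/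
theorem RR_ind {C : RR k Q → Prop} (h0 : ∀ a : k, C (algebraMap k _ a))
    (hp : ∀ v, C (pp k Q v)) (hg : ∀ e, C (ga k Q e))
    (hmul : ∀ x y, C x → C y → C (x * y)) (hadd : ∀ x y, C x → C y → C (x + y)) (x) : C x := by
  obtain ⟨y, rfl⟩ := RingQuot.mkAlgHom_surjective k (PathRel k Q.rev) x
  change C (PathAlg.mk k Q.rev y)
  induction y using FreeAlgebra.induction with
  | grade0 r =>
    have : PathAlg.mk k Q.rev (algebraMap k _ r) = algebraMap k (RR k Q) r :=
      (PathAlg.mk k Q.rev).commutes r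
    rw [this]; exact h0 r
  | grade1 g =>
    cases g with
    | vertex v => exact hp v
    | edge e => exact hg e
  | mul a b ha hb => rw [map_mul]; exact hmul _ _ ha hb
  | add a b ha hb => rw [map_add]; exact hadd _ _ ha hb

/-- Induction for the Leavitt path algebra. -/
theorem LL_ind {C : Leavitt k Q → Prop} (h0 : ∀ a : k, C (algebraMap k _ a))
    (hp : ∀ v, C (Leavitt.p k Q v)) (he : ∀ e, C (Leavitt.ed k Q e))
    (hg : ∀ e, C (Leavitt.gh k Q e))
    (hmul : ∀ x y, C x → C y → C (x * y)) (hadd : ∀ x y, C x → C y → C (x + y)) (x) : C x := by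
  obtain ⟨y, rfl⟩ := RingQuot.mkAlgHom_surjective k (LeavittRel k Q) x
  change C (Leavitt.mk k Q y)
  induction y using FreeAlgebra.induction with
  | grade0 r =>
    have : Leavitt.mk k Q (algebraMap k _ r) = algebraMap k (Leavitt k Q) r :=
      (Leavitt.mk k Q).commutes r
    rw [this]; exact h0 r
  | grade1 g =>
    cases g with
    | vertex v => exact hp v
    | edge e => exact he e
    | ghost e => exact hg e
  | mul a b ha hb => rw [map_mul]; exact hmul _ _ ha hb
  | add a b ha hb => rw [map_add]; exact hadd _ _ ha hb

variable (k Q)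

theorem L_ed_tgt (e : Q.A) : Leavitt.ed k Q e * Leavitt.p k Q (Q.tgt e) = Leavitt.ed k Q e := by
  have h := Leavitt.mk_rel k Q (LeavittRel.mul_tgt e)
  rwa [map_mul] at h
theorem L_src_ed (e : Q.A) : Leavitt.p k Q (Q.src e) * Leavitt.ed k Q e = Leavitt.ed k Q e := by
  have h := Leavitt.mk_rel k Q (LeavittRel.src_mul e)
  rwa [map_mul] at h
theorem L_gh_ed (e : Q.A) : Leavitt.gh k Q e * Leavitt.ed k Q e = Leavitt.p k Q (Q.tgt e) := by
  have h := Leavitt.mk_rel k Q (LeavittRel.ghost_mul_edge_self e)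
  rwa [map_mul] at h
theorem L_gh_ed_ne {e f : Q.A} (hne : e ≠ f) : Leavitt.gh k Q e * Leavitt.ed k Q f = 0 := by
  have h := Leavitt.mk_rel k Q (LeavittRel.ghost_mul_edge_ne e f hne)
  rwa [map_mul, map_zero] at h
theorem L_ck (v : Q.V) (hv : ∃ e : Q.A, Q.src e = v) :
    ∑ e ∈ Finset.univ.filter (fun e : Q.A => Q.src e = v),
      Leavitt.ed k Q e * Leavitt.gh k Q e = Leavitt.p k Q v := by
  have h := Leavitt.mk_rel k Q (LeavittRel.cuntz_krieger v hv)
  rw [map_sum] at h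
  simp only [map_mul] at h
  exact h

variable {k Q}

/-- An element of an `L`-module is determined by its sink components and its images under the
ghost arrows. -/
theorem L_mem_span {X : Type} [AddCommGroup X] [Module (Leavitt k Q) X]
    (U : Submodule (Leavitt k Q) X) (x : X)
    (hs : ∀ v, IsSink Q v → Leavitt.p k Q v • x ∈ U) (hg : ∀ e, Leavitt.gh k Q e • x ∈ U) :
    x ∈ U := by
  have : x = ∑ v, Leavitt.p k Q v • x := by
    rw [← Finset.sum_smul, Leavitt.sum_p, one_smul]
  rw [this]
  refine Submodule.sum_mem _ fun v _ => ?_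
  by_cases hv : IsSink Q v
  · exact hs v hv
  · have hv' : ∃ e : Q.A, Q.src e = v := by
      unfold IsSink at hv; push Not at hv; exact hv
    rw [← L_ck k Q v hv', Finset.sum_smul]
    refine Submodule.sum_mem _ fun e _ => ?_
    rw [mul_smul]
    exact U.smul_mem _ (hg e)

/-- Levels of the reachability filtration. -/
def Lev {X : Type} [AddCommGroup X] [Module (Leavitt k Q) X] (N : AddSubgroup X) :
    ℕ → X → Prop
  | 0, x => x ∈ N
  | m + 1, x => (∀ v, IsSink Q v → Leavitt.p k Q v • x ∈ N) ∧
      ∀ e, Lev N m (Leavitt.gh k Q e • x)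

section Reach

variable {X : Type} [AddCommGroup X] [Module (Leavitt k Q) X] (N : AddSubgroup X)

theorem Lev.zero (m : ℕ) : Lev (k := k) (Q := Q) N m 0 := by
  induction m with
  | zero => exact N.zero_mem
  | succ m ih => exact ⟨fun v _ => by rw [smul_zero]; exact N.zero_mem,
      fun e => by rw [smul_zero]; exact ih⟩

theorem Lev.add {m : ℕ} {x y : X} (hx : Lev (k := k) (Q := Q) N m x)
    (hy : Lev (k := k) (Q := Q) N m y) : Lev (k := k) (Q := Q) N m (x + y) := by
  induction m generalizing x y with
  | zero => exact N.add_mem hx hy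
  | succ m ih => exact ⟨fun v hv => by rw [smul_add]; exact N.add_mem (hx.1 v hv) (hy.1 v hv),
      fun e => by rw [smul_add]; exact ih (hx.2 e) (hy.2 e)⟩

theorem Lev.succ (hp : ∀ v, ∀ x ∈ N, Leavitt.p k Q v • x ∈ N)
    (hg : ∀ e, ∀ x ∈ N, Leavitt.gh k Q e • x ∈ N) {m : ℕ} {x : X}
    (hx : Lev (k := k) (Q := Q) N m x) :
    Lev (k := k) (Q := Q) N (m + 1) x := by
  induction m generalizing x with
  | zero => exact ⟨fun v _ => hp v x hx, fun e => hg e x hx⟩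
  | succ m ih => exact ⟨hx.1, fun e => ih (hx.2 e)⟩

theorem Lev.mono (hp : ∀ v, ∀ x ∈ N, Leavitt.p k Q v • x ∈ N)
    (hg : ∀ e, ∀ x ∈ N, Leavitt.gh k Q e • x ∈ N) {m n : ℕ} (h : m ≤ n) {x : X}
    (hx : Lev (k := k) (Q := Q) N m x) : Lev (k := k) (Q := Q) N n x := by
  induction h with
  | refl => exact hx
  | step _ ih => exact Lev.succ N hp hg ih

theorem Lev.smul_p (hp : ∀ v, ∀ x ∈ N, Leavitt.p k Q v • x ∈ N) (v : Q.V) {m : ℕ} {x : X}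
    (hx : Lev (k := k) (Q := Q) N m x) : Lev (k := k) (Q := Q) N m (Leavitt.p k Q v • x) := by
  cases m with
  | zero => exact hp v x hx
  | succ m =>
    refine ⟨fun w hw => ?_, fun e => ?_⟩
    · by_cases h : w = v
      · subst h; rw [← mul_smul, Leavitt.p_mul_self]; exact hx.1 w hw
      · rw [← mul_smul, Leavitt.p_mul_ne k Q w v h, zero_smul]; exact N.zero_mem
    · by_cases h : Q.src e = v
      · subst h; rw [← mul_smul, Leavitt.gh_mul_src]; exact hx.2 e
      · rw [← mul_smul, ← Leavitt.gh_mul_src, mul_assoc, Leavitt.p_mul_ne k Q _ v h, mul_zero,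
          zero_smul]
        exact Lev.zero N m

/-- If `N` generates `X` over `L`, every element has a level. -/
theorem Lev.exists (hp : ∀ v, ∀ x ∈ N, Leavitt.p k Q v • x ∈ N)
    (hg : ∀ e, ∀ x ∈ N, Leavitt.gh k Q e • x ∈ N)
    (hk : ∀ a : k, ∀ x ∈ N, algebraMap k (Leavitt k Q) a • x ∈ N)
    (hspan : Submodule.span (Leavitt k Q) (N : Set X) = ⊤) (x : X) :
    ∃ m, Lev (k := k) (Q := Q) N m x := by
  have key : ∀ l : Leavitt k Q, ∀ x : X, (∃ m, Lev (k := k) (Q := Q) N m x) →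
      ∃ m, Lev (k := k) (Q := Q) N m (l • x) := by
    intro l
    induction l using LL_ind with
    | h0 a =>
      rintro x ⟨m, hm⟩
      refine ⟨m, ?_⟩
      induction m generalizing x with
      | zero => exact hk a x hm
      | succ m ih =>
        refine ⟨fun v hv => ?_, fun e => ?_⟩
        · rw [← mul_smul, ← Algebra.commutes, mul_smul]; exact hk a _ (hm.1 v hv)
        · rw [← mul_smul, ← Algebra.commutes, mul_smul]; exact ih _ (hm.2 e)
    | hp v => rintro x ⟨m, hm⟩; exact ⟨m, Lev.smul_p N hp v hm⟩
    | he e =>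
      rintro x ⟨m, hm⟩
      refine ⟨m + 1, fun v hv => ?_, fun f => ?_⟩
      · rw [← mul_smul, ← L_src_ed, ← mul_assoc, Leavitt.p_mul_ne k Q v _ (fun h => hv e h.symm),
          zero_mul, zero_smul]
        exact N.zero_mem
      · by_cases h : f = e
        · subst h; rw [← mul_smul, L_gh_ed]; exact Lev.smul_p N hp _ hm
        · rw [← mul_smul, L_gh_ed_ne k Q h, zero_smul]; exact Lev.zero N m
    | hg e => rintro x ⟨m, hm⟩; exact ⟨m, (Lev.succ N hp hg hm).2 e⟩
    | hmul a b ha hb => intro x hx; rw [mul_smul]; exact ha _ (hb _ hx)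
    | hadd a b ha hb =>
      intro x hx
      obtain ⟨m, hm⟩ := ha x hx
      obtain ⟨n, hn⟩ := hb x hx
      rw [add_smul]
      exact ⟨max m n, Lev.add N (Lev.mono N hp hg (le_max_left _ _) hm)
        (Lev.mono N hp hg (le_max_right _ _) hn)⟩
  have hx : x ∈ Submodule.span (Leavitt k Q) (N : Set X) := hspan ▸ Submodule.mem_top
  induction hx using Submodule.span_induction with
  | mem x h => exact ⟨0, h⟩
  | zero => exact ⟨0, N.zero_mem⟩
  | add x y _ _ hx hy =>
    obtain ⟨m, hm⟩ := hx
    obtain ⟨n, hn⟩ := hy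
    exact ⟨max m n, Lev.add N (Lev.mono N hp hg (le_max_left _ _) hm)
        (Lev.mono N hp hg (le_max_right _ _) hn)⟩
  | smul a x _ hx => exact key a x hx

/-- The main reachability lemma: every `L`-submodule is generated by its intersection with `N`. -/
theorem span_inter_eq (hp : ∀ v, ∀ x ∈ N, Leavitt.p k Q v • x ∈ N)
    (hg : ∀ e, ∀ x ∈ N, Leavitt.gh k Q e • x ∈ N)
    (hk : ∀ a : k, ∀ x ∈ N, algebraMap k (Leavitt k Q) a • x ∈ N)
    (hspan : Submodule.span (Leavitt k Q) (N : Set X) = ⊤) (U : Submodule (Leavitt k Q) X) :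
    U = Submodule.span (Leavitt k Q) ((U : Set X) ∩ N) := by
  apply le_antisymm
  · intro x hx
    obtain ⟨m, hm⟩ := Lev.exists N hp hg hk hspan x
    induction m generalizing x with
    | zero => exact Submodule.subset_span ⟨hx, hm⟩
    | succ m ih =>
      refine L_mem_span _ x (fun v hv => ?_) (fun e => ?_)
      · exact Submodule.subset_span ⟨U.smul_mem _ hx, hm.1 v hv⟩
      · exact ih (U.smul_mem _ hx) (hm.2 e)
  · exact Submodule.span_le.mpr Set.inter_subset_left

end Reach
end Basics

section Tensor

variable {k : Type} [Field k] {Q : FinQuiver}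
variable (N : Type) [AddCommGroup N] [Module (RR k Q) N]

variable (k Q) in
/-- The module `L ⊗_R N`. -/
def TT : Type := TensorPhi (RR k Q) (Leavitt k Q) (phi k Q) N

noncomputable instance : AddCommGroup (TT k Q N) :=
  inferInstanceAs (AddCommGroup (TensorPhi (RR k Q) (Leavitt k Q) (phi k Q) N))

noncomputable instance : Module (Leavitt k Q) (TT k Q N) :=
  inferInstanceAs (Module (Leavitt k Q) (TensorPhi (RR k Q) (Leavitt k Q) (phi k Q) N))

/-- The quotient map. -/
noncomputable def tq : TensorProduct ℤ (Leavitt k Q) N →ₗ[Leavitt k Q] TT k Q N :=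
  Submodule.mkQ (trel (RR k Q) (Leavitt k Q) (phi k Q) N)

theorem tq_surj : Function.Surjective (tq (k := k) (Q := Q) N) :=
  Submodule.mkQ_surjective _

theorem tq_rel (l : Leavitt k Q) (p : RR k Q) (m : N) :
    tq N ((l * phi k Q p) ⊗ₜ[ℤ] m) = tq N (l ⊗ₜ[ℤ] (p • m)) := by
  rw [← sub_eq_zero, ← map_sub]
  exact (Submodule.Quotient.mk_eq_zero _).mpr (Submodule.subset_span ⟨l, p, m, rfl⟩)

/-- The canonical map `N → L ⊗_R N`. -/
noncomputable def tmk : N →ₛₗ[phi k Q] TT k Q N where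
  toFun n := tq N ((1 : Leavitt k Q) ⊗ₜ[ℤ] n)
  map_add' a b := by rw [TensorProduct.tmul_add, map_add]
  map_smul' r n := by
    rw [← map_smul, TensorProduct.smul_tmul', smul_eq_mul, mul_one, ← tq_rel, one_mul]

theorem tq_tmul (l : Leavitt k Q) (n : N) : tq N (l ⊗ₜ[ℤ] n) = l • tmk N n := by
  change _ = l • tq N ((1 : Leavitt k Q) ⊗ₜ[ℤ] n)
  rw [← map_smul, TensorProduct.smul_tmul', smul_eq_mul, mul_one]

theorem tmk_span : Submodule.span (Leavitt k Q) (Set.range (tmk (k := k) (Q := Q) N)) = ⊤ := by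
  rw [eq_top_iff]
  rintro x -
  obtain ⟨y, rfl⟩ := tq_surj N x
  induction y using TensorProduct.induction_on with
  | zero => rw [map_zero]; exact Submodule.zero_mem _
  | tmul l n =>
    rw [tq_tmul]
    exact Submodule.smul_mem _ _ (Submodule.subset_span ⟨n, rfl⟩)
  | add a b ha hb => rw [map_add]; exact Submodule.add_mem _ ha hb

variable {N}
variable {X : Type} [AddCommGroup X] [Module (Leavitt k Q) X]

theorem tt_ext {f g : TT k Q N →ₗ[Leavitt k Q] X} (h : ∀ n, f (tmk N n) = g (tmk N n)) :
    f = g := by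
  refine LinearMap.ext_on_range (v := tmk (k := k) (Q := Q) N) (tmk_span N) h

/-- The universal property of `L ⊗_R N`. -/
noncomputable def tlift (f : N →ₛₗ[phi k Q] X) : TT k Q N →ₗ[Leavitt k Q] X :=
  Submodule.liftQ _ (TensorProduct.AlgebraTensorModule.lift
    (LinearMap.toSpanSingleton (Leavitt k Q) (N →ₗ[ℤ] X) f.toAddMonoidHom.toIntLinearMap))
    (by
      refine Submodule.span_le.mpr ?_
      rintro z ⟨l, p, m, rfl⟩
      rw [SetLike.mem_coe, LinearMap.mem_ker, map_sub,
        TensorProduct.AlgebraTensorModule.lift_tmul, TensorProduct.AlgebraTensorModule.lift_tmul]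
      change (l * phi k Q p) • f m - l • f (p • m) = 0
      rw [map_smulₛₗ, mul_smul, sub_self])

@[simp] theorem tlift_tmk (f : N →ₛₗ[phi k Q] X) (n : N) : tlift f (tmk N n) = f n :=
  one_smul (Leavitt k Q) (f n)

variable {N' : Type} [AddCommGroup N'] [Module (RR k Q) N']

/-- Functoriality. -/
noncomputable def tm (f : N →ₗ[RR k Q] N') : TT k Q N →ₗ[Leavitt k Q] TT k Q N' :=
  tlift ((tmk N').comp f)

@[simp] theorem tm_tmk (f : N →ₗ[RR k Q] N') (n : N) : tm f (tmk N n) = tmk N' (f n) := by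
  simp [tm]

/-- Functoriality for isomorphisms. -/
noncomputable def tmEquiv (f : N ≃ₗ[RR k Q] N') : TT k Q N ≃ₗ[Leavitt k Q] TT k Q N' :=
  LinearEquiv.ofLinearMap (tm f.toLinearMap) (tm f.symm.toLinearMap)
    (tt_ext fun n => by simp) (tt_ext fun n => by simp)

theorem tm_surjective (f : N →ₗ[RR k Q] N') (hf : Function.Surjective f) :
    Function.Surjective (tm f) := by
  rw [← LinearMap.range_eq_top, eq_top_iff, ← tmk_span, Submodule.span_le]
  rintro _ ⟨n, rfl⟩
  obtain ⟨m, rfl⟩ := hf n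
  exact ⟨tmk N m, tm_tmk f m⟩

theorem tm_exact (A : Submodule (RR k Q) N) :
    Function.Exact (tm A.subtype) (tm A.mkQ) := by
  intro x
  constructor
  · intro hx
    let g : N →ₛₗ[phi k Q] (TT k Q N ⧸ LinearMap.range (tm (k := k) (Q := Q) A.subtype)) :=
      (Submodule.mkQ _).comp (tmk N)
    let h : TT k Q (N ⧸ A) →ₗ[Leavitt k Q] (TT k Q N ⧸ LinearMap.range (tm A.subtype)) :=
      tlift (A.liftQ g (by
        intro a ha
        rw [LinearMap.mem_ker]
        change Submodule.Quotient.mk (tmk N a) = _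
        rw [Submodule.Quotient.mk_eq_zero]
        exact ⟨tmk A ⟨a, ha⟩, by simp⟩))
    have hh : h ∘ₗ tm A.mkQ = Submodule.mkQ _ := tt_ext fun n => by
      simp [h, g]
    have := congrArg (fun f => f x) hh
    simp only [LinearMap.comp_apply, hx, map_zero] at this
    have h2 := this.symm
    rw [Submodule.mkQ_apply, Submodule.Quotient.mk_eq_zero] at h2
    exact h2
  · rintro ⟨y, rfl⟩
    have : tm A.mkQ ∘ₗ tm A.subtype = (0 : TT k Q A →ₗ[Leavitt k Q] _) := tt_ext fun n => by
      simp only [LinearMap.comp_apply, tm_tmk, Submodule.subtype_apply, Submodule.mkQ_apply,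
        LinearMap.zero_apply]
      rw [(Submodule.Quotient.mk_eq_zero A).mpr n.2, map_zero]
    exact congrArg (fun f => f y) this

/-- Submodules of `L ⊗ N` are generated by their intersection with the image of `N`. -/
theorem tt_span_eq (U : Submodule (Leavitt k Q) (TT k Q N)) :
    U = Submodule.span (Leavitt k Q) ((U : Set (TT k Q N)) ∩ Set.range (tmk N)) := by
  have := span_inter_eq (k := k) (Q := Q) (X := TT k Q N) ((tmk N).toAddMonoidHom.range)
    (by rintro v _ ⟨n, rfl⟩
        exact ⟨pp k Q v • n, by
          change tmk N _ = _ • tmk N n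
          rw [map_smulₛₗ, phi_pp]⟩)
    (by rintro v _ ⟨n, rfl⟩
        exact ⟨ga k Q v • n, by
          change tmk N _ = _ • tmk N n
          rw [map_smulₛₗ, phi_ga]⟩)
    (by rintro v _ ⟨n, rfl⟩
        exact ⟨algebraMap k (RR k Q) v • n, by
          change tmk N _ = _ • tmk N n
          rw [map_smulₛₗ, phi_algebraMap]⟩)
    (tmk_span N) U
  exact this

end Tensor
end LPA

namespace LPA

open TensorProduct

section Emb

set_option linter.unusedSectionVars false

variable {k : Type} [Field k] {Q : FinQuiver}

/-- Torsion elements of level `m`. -/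
def Tor {N : Type} [AddCommGroup N] [Module (RR k Q) N] : ℕ → N → Prop
  | 0, n => n = 0
  | m + 1, n => (∀ v, IsSink Q v → pp k Q v • n = 0) ∧ ∀ e, Tor m (ga k Q e • n)

theorem Tor.map_zero {N : Type} [AddCommGroup N] [Module (RR k Q) N]
    {X : Type} [AddCommGroup X] [Module (Leavitt k Q) X] (f : N →ₛₗ[phi k Q] X) {m : ℕ} {n : N}
    (h : Tor (k := k) (Q := Q) m n) : f n = 0 := by
  induction m generalizing n with
  | zero => rw [show n = 0 from h, _root_.map_zero]
  | succ m ih =>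
    have := L_mem_span (k := k) (Q := Q) (⊥ : Submodule (Leavitt k Q) X) (f n)
      (fun v hv => by
        rw [Submodule.mem_bot, ← phi_pp, ← map_smulₛₗ, h.1 v hv, _root_.map_zero])
      (fun e => by
        rw [Submodule.mem_bot, ← phi_ga, ← map_smulₛₗ]; exact ih (h.2 e))
    simpa using this

theorem Tor.of_injective {N N' : Type} [AddCommGroup N] [Module (RR k Q) N]
    [AddCommGroup N'] [Module (RR k Q) N'] (f : N →ₗ[RR k Q] N') (hf : Function.Injective f)
    {m : ℕ} {n : N} (h : Tor (k := k) (Q := Q) m (f n)) : Tor (k := k) (Q := Q) m n := by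
  induction m generalizing n with
  | zero => exact hf (by rw [_root_.map_zero]; exact h)
  | succ m ih =>
    exact ⟨fun v hv => hf (by rw [_root_.map_zero, map_smul]; exact h.1 v hv),
      fun e => ih (by rw [map_smul]; exact h.2 e)⟩

variable (Q)

/-- Arrows together with a loop at each sink. -/
abbrev APlus : Type := Q.A ⊕ {v : Q.V // IsSink Q v}

variable {Q}

/-- Source. -/
def sP : APlus Q → Q.V
  | Sum.inl e => Q.src e
  | Sum.inr v => v.1

/-- Target. -/
def rP : APlus Q → Q.V
  | Sum.inl e => Q.tgt e
  | Sum.inr v => v.1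

variable (k) in
/-- The operator attached to an extended arrow. -/
noncomputable def oP : APlus Q → RR k Q
  | Sum.inl e => ga k Q e
  | Sum.inr v => pp k Q v.1

theorem oP_sP (a : APlus Q) : oP k a * pp k Q (sP a) = oP k a := by
  cases a with
  | inl e => exact ga_src k Q e
  | inr v => exact pp_self k Q v.1

theorem oP_sP_ne (a : APlus Q) {v : Q.V} (h : sP a ≠ v) : oP k a * pp k Q v = 0 := by
  rw [← oP_sP, mul_assoc, pp_ne k Q h, mul_zero]

variable (Q)

/-- Infinite paths. -/
def Om : Type := {w : ℕ → APlus Q // ∀ i, rP (w i) = sP (w (i + 1))}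

variable {Q}

/-- The source of an infinite path. -/
def Om.s (w : Om Q) : Q.V := sP (w.1 0)

/-- The tail. -/
def Om.tail (w : Om Q) : Om Q := ⟨fun i => w.1 (i + 1), fun i => w.2 (i + 1)⟩

/-- Prepending an arrow. -/
def Om.cons (a : APlus Q) (w : Om Q) (h : rP a = w.s) : Om Q :=
  ⟨fun i => Nat.casesOn i a w.1, fun i => by cases i with
    | zero => exact h
    | succ i => exact w.2 i⟩

theorem Om.cons_tail (w : Om Q) (h : rP (w.1 0) = w.tail.s) : Om.cons (w.1 0) w.tail h = w := by
  apply Subtype.ext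
  funext i
  cases i <;> rfl

theorem Om.rP_head (w : Om Q) : rP (w.1 0) = w.tail.s := w.2 0

theorem Om.tail_cons (a : APlus Q) (w : Om Q) (h : rP a = w.s) : (Om.cons a w h).tail = w := rfl

theorem exists_aplus (v : Q.V) : ∃ a : APlus Q, sP a = v := by
  by_cases hv : IsSink Q v
  · exact ⟨Sum.inr ⟨v, hv⟩, rfl⟩
  · unfold IsSink at hv; push Not at hv
    obtain ⟨e, he⟩ := hv
    exact ⟨Sum.inl e, he⟩

theorem exists_om (v : Q.V) : ∃ w : Om Q, w.s = v := by
  choose f hf using exists_aplus (Q := Q)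
  let g : ℕ → APlus Q := fun i => Nat.rec (f v) (fun _ a => f (rP a)) i
  exact ⟨⟨g, fun i => (hf _).symm⟩, hf v⟩

section Germs

variable (N : Type) [AddCommGroup N] [Module (RR k Q) N] [Module k N]

variable (Q) in
/-- Functions on infinite paths and levels. -/
abbrev Fn : Type := Om Q → ℕ → N

variable (k Q) in
/-- Eventually vanishing functions. -/
def Ev : Submodule k (Fn Q N) where
  carrier := {x | ∃ m0, ∀ w m, m0 ≤ m → x w m = 0}
  add_mem' := by
    rintro x y ⟨a, ha⟩ ⟨b, hb⟩
    exact ⟨max a b, fun w m hm => by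
      rw [Pi.add_apply, Pi.add_apply, ha w m (le_trans (le_max_left _ _) hm),
        hb w m (le_trans (le_max_right _ _) hm), add_zero]⟩
  zero_mem' := ⟨0, fun _ _ _ => rfl⟩
  smul_mem' := by
    rintro c x ⟨a, ha⟩
    exact ⟨a, fun w m hm => by rw [Pi.smul_apply, Pi.smul_apply, ha w m hm, smul_zero]⟩

variable (k Q) in
/-- The module of germs. -/
abbrev Gm : Type := Fn Q N ⧸ Ev k Q N

open Classical in
variable (k) in
/-- Vertex operators. -/
noncomputable def fP (v : Q.V) : Fn Q N →ₗ[k] Fn Q N where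
  toFun x := fun w m => if w.s = v then x w m else 0
  map_add' x y := by
    funext w m; simp only [Pi.add_apply]; split_ifs <;> simp
  map_smul' c x := by
    funext w m; simp only [Pi.smul_apply, RingHom.id_apply]; split_ifs <;> simp

open Classical in
variable (k) in
/-- Ghost operators. -/
noncomputable def fG (e : Q.A) : Fn Q N →ₗ[k] Fn Q N where
  toFun x := fun w m => if h : rP (Sum.inl e) = w.s then x (Om.cons (Sum.inl e) w h) (m + 1) else 0
  map_add' x y := by
    funext w m; simp only [Pi.add_apply]; split_ifs <;> simp
  map_smul' c x := by
    funext w m; simp only [Pi.smul_apply, RingHom.id_apply]; split_ifs <;> simp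

open Classical in
variable (k) in
/-- Edge operators. -/
noncomputable def fE (e : Q.A) : Fn Q N →ₗ[k] Fn Q N where
  toFun x := fun w m => if w.1 0 = Sum.inl e then x w.tail (m - 1) else 0
  map_add' x y := by
    funext w m; simp only [Pi.add_apply]; split_ifs <;> simp
  map_smul' c x := by
    funext w m; simp only [Pi.smul_apply, RingHom.id_apply]; split_ifs <;> simp

theorem fP_ev (v : Q.V) : Ev k Q N ≤ (Ev k Q N).comap (fP k N v) := by
  rintro x ⟨a, ha⟩
  exact ⟨a, fun w m hm => by
    change (if _ then _ else _) = _
    rw [ha w m hm, ite_self]⟩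

theorem fG_ev (e : Q.A) : Ev k Q N ≤ (Ev k Q N).comap (fG k N e) := by
  rintro x ⟨a, ha⟩
  exact ⟨a, fun w m hm => by
    change (dite _ _ _) = _
    split_ifs with h
    · exact ha _ _ (by omega)
    · rfl⟩

theorem fE_ev (e : Q.A) : Ev k Q N ≤ (Ev k Q N).comap (fE k N e) := by
  rintro x ⟨a, ha⟩
  exact ⟨a + 1, fun w m hm => by
    change (ite _ _ _) = _
    split_ifs with h
    · exact ha _ _ (by omega)
    · rfl⟩

variable (k) in
/-- Vertex operators on germs. -/
noncomputable def gP (v : Q.V) : Module.End k (Gm k Q N) := Submodule.mapQ _ _ _ (fP_ev N v)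
variable (k) in
/-- Ghost operators on germs. -/
noncomputable def gG (e : Q.A) : Module.End k (Gm k Q N) := Submodule.mapQ _ _ _ (fG_ev N e)
variable (k) in
/-- Edge operators on germs. -/
noncomputable def gE (e : Q.A) : Module.End k (Gm k Q N) := Submodule.mapQ _ _ _ (fE_ev N e)

theorem gP_mk (v : Q.V) (x : Fn Q N) :
    gP k N v (Submodule.Quotient.mk x) = Submodule.Quotient.mk (fP k N v x) := rfl
theorem gG_mk (v : Q.A) (x : Fn Q N) :
    gG k N v (Submodule.Quotient.mk x) = Submodule.Quotient.mk (fG k N v x) := rfl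
theorem gE_mk (v : Q.A) (x : Fn Q N) :
    gE k N v (Submodule.Quotient.mk x) = Submodule.Quotient.mk (fE k N v x) := rfl

theorem gm_eq {x y : Fn Q N} (h : ∀ w m, 1 ≤ m → x w m = y w m) :
    (Submodule.Quotient.mk x : Gm k Q N) = Submodule.Quotient.mk y := by
  rw [Submodule.Quotient.eq]
  exact ⟨1, fun w m hm => by rw [Pi.sub_apply, Pi.sub_apply, h w m hm, sub_self]⟩

theorem gend_ext {f g : Module.End k (Gm k Q N)}
    (h : ∀ x : Fn Q N, f (Submodule.Quotient.mk x) = g (Submodule.Quotient.mk x)) : f = g := by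
  refine LinearMap.ext fun y => ?_
  obtain ⟨x, rfl⟩ := Submodule.Quotient.mk_surjective _ y
  exact h x

variable (k Q) in
/-- The action of the Leavitt path algebra on germs. -/
noncomputable def gAct : Leavitt k Q →ₐ[k] Module.End k (Gm k Q N) :=
  RingQuot.liftAlgHom k ⟨((FreeAlgebra.lift k fun g =>
    match g with
    | LGen.vertex v => gP k N v
    | LGen.edge e => gE k N e
    | LGen.ghost e => gG k N e : FreeAlgebra k (LGen Q) →ₐ[k] Module.End k (Gm k Q N))), by
      intro x y h
      induction h with
      | vertex_mul_self v =>
          simp only [map_mul, FreeAlgebra.lift_ι_apply]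
          refine gend_ext N fun x => ?_
          rw [Module.End.mul_apply, gP_mk, gP_mk]
          refine gm_eq N fun w m hm => ?_
          change ite _ (ite _ _ _) _ = ite _ _ _
          split_ifs <;> rfl
      | vertex_mul_ne v u h =>
          simp only [map_mul, map_zero, FreeAlgebra.lift_ι_apply]
          refine gend_ext N fun x => ?_
          rw [Module.End.mul_apply, gP_mk, gP_mk]
          refine gm_eq N (y := 0) fun w m hm => ?_
          change ite _ (ite _ _ _) _ = _
          split_ifs with h1 h2
          · exact absurd (h1.symm.trans h2) h
          · rfl
          · rfl
      | sum_vertex =>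
          simp only [map_sum, map_one, FreeAlgebra.lift_ι_apply]
          refine gend_ext N fun x => ?_
          rw [LinearMap.sum_apply, Module.End.one_apply]
          simp only [gP_mk]
          simp only [← Submodule.mkQ_apply]
          rw [← map_sum]
          refine gm_eq N fun w m hm => ?_
          rw [Finset.sum_apply, Finset.sum_apply]
          change ∑ v, ite (w.s = v) (x w m) 0 = _
          rw [Finset.sum_ite_eq]
          simp
      | src_mul e =>
          simp only [map_mul, FreeAlgebra.lift_ι_apply]
          refine gend_ext N fun x => ?_
          rw [Module.End.mul_apply, gE_mk, gP_mk]
          refine gm_eq N fun w m hm => ?_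
          change ite _ (ite _ _ _) _ = ite _ _ _
          split_ifs with h1 h2 h2
          · rfl
          · rfl
          · exact absurd (show w.s = _ by unfold Om.s; rw [h2]; rfl) h1
          · rfl
      | mul_tgt e =>
          simp only [map_mul, FreeAlgebra.lift_ι_apply]
          refine gend_ext N fun x => ?_
          rw [Module.End.mul_apply, gP_mk, gE_mk, gE_mk]
          refine gm_eq N fun w m hm => ?_
          change ite _ (ite _ _ _) _ = ite _ _ _
          split_ifs with h1 h2
          · rfl
          · exact absurd (show w.tail.s = _ by rw [← w.rP_head, h1]; rfl) h2
          · rfl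
      | tgt_mul_ghost e =>
          simp only [map_mul, FreeAlgebra.lift_ι_apply]
          refine gend_ext N fun x => ?_
          rw [Module.End.mul_apply, gG_mk, gP_mk]
          refine gm_eq N fun w m hm => ?_
          change ite _ (dite _ _ _) _ = dite _ _ _
          split_ifs with h1 h2 h2
          · rfl
          · rfl
          · exact absurd h2.symm h1
          · rfl
      | ghost_mul_src e =>
          simp only [map_mul, FreeAlgebra.lift_ι_apply]
          refine gend_ext N fun x => ?_
          rw [Module.End.mul_apply, gP_mk, gG_mk, gG_mk]
          refine gm_eq N fun w m hm => ?_
          change dite _ (fun _ => ite _ _ _) _ = dite _ _ _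
          split_ifs with h1 h2
          · rfl
          · exact absurd rfl h2
          · rfl
      | ghost_mul_edge_self e =>
          simp only [map_mul, FreeAlgebra.lift_ι_apply]
          refine gend_ext N fun x => ?_
          rw [Module.End.mul_apply, gE_mk, gG_mk, gP_mk]
          refine gm_eq N fun w m hm => ?_
          change dite _ (fun _ => ite _ _ _) _ = ite _ _ _
          by_cases h1 : rP (Sum.inl e) = w.s
          · exact (dif_pos h1).trans ((if_pos rfl).trans (if_pos h1.symm).symm)
          · exact (dif_neg h1).trans (if_neg (Ne.symm h1)).symm
      | ghost_mul_edge_ne e f h =>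
          simp only [map_mul, map_zero, FreeAlgebra.lift_ι_apply]
          refine gend_ext N fun x => ?_
          rw [Module.End.mul_apply, gE_mk, gG_mk]
          refine gm_eq N (y := 0) fun w m hm => ?_
          change dite _ (fun _ => ite _ _ _) _ = _
          split_ifs with h1 h2
          · exact absurd (Sum.inl_injective h2) h
          · rfl
          · rfl
      | cuntz_krieger v h =>
          simp only [map_sum, map_mul, FreeAlgebra.lift_ι_apply]
          refine gend_ext N fun x => ?_
          rw [LinearMap.sum_apply]
          simp only [Module.End.mul_apply, gE_mk, gG_mk, gP_mk]
          simp only [← Submodule.mkQ_apply]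
          rw [← map_sum]
          refine gm_eq N fun w m hm => ?_
          rw [Finset.sum_apply, Finset.sum_apply]
          have hval : ∀ e, fE k N e (fG k N e x) w m = if w.1 0 = Sum.inl e then x w m else 0 := by
            intro e
            change ite _ (dite _ _ _) _ = _
            split_ifs with h1 h2
            · congr 1
              · exact Subtype.ext (funext fun i => by
                  cases i with
                  | zero => exact h1.symm
                  | succ i => rfl)
              · omega
            · exact absurd (h1 ▸ w.rP_head) h2
            · rfl
          simp only [hval]
          change _ = ite _ _ _
          split_ifs with h1
          · cases hw : w.1 0 with
            | inl e =>
              simp only [Sum.inl.injEq]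
              rw [Finset.sum_ite_eq, if_pos]
              rw [Finset.mem_filter]
              exact ⟨Finset.mem_univ _, by rw [← h1]; unfold Om.s; rw [hw]; rfl⟩
            | inr u =>
              obtain ⟨e, he⟩ := h
              refine absurd ?_ (u.2 e)
              rw [he, ← h1]; unfold Om.s; rw [hw]; rfl
          · refine Finset.sum_eq_zero fun e he => if_neg fun hw => h1 ?_
            rw [Finset.mem_filter] at he
            rw [← he.2]; unfold Om.s; rw [hw]; rfl⟩

theorem gAct_p (v : Q.V) : gAct k Q N (Leavitt.p k Q v) = gP k N v :=
  (RingQuot.liftAlgHom_mkAlgHom_apply k _ _ _).trans (FreeAlgebra.lift_ι_apply _ _)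
theorem gAct_gh (e : Q.A) : gAct k Q N (Leavitt.gh k Q e) = gG k N e :=
  (RingQuot.liftAlgHom_mkAlgHom_apply k _ _ _).trans (FreeAlgebra.lift_ι_apply _ _)

variable (k Q) in
/-- Germs as a module over the Leavitt path algebra. -/
def GerM : Type := Gm k Q N

noncomputable instance : AddCommGroup (GerM k Q N) := inferInstanceAs (AddCommGroup (Gm k Q N))

noncomputable instance : Module (Leavitt k Q) (GerM k Q N) :=
  letI : Module (Module.End k (Gm k Q N)) (GerM k Q N) :=
    inferInstanceAs (Module (Module.End k (Gm k Q N)) (Gm k Q N))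
  Module.compHom (GerM k Q N) (gAct k Q N).toRingHom

theorem GerM_smul (l : Leavitt k Q) (x : GerM k Q N) : l • x = gAct k Q N l x := rfl

variable {N}

/-- The action along an infinite path. -/
noncomputable def act : ℕ → Om Q → N → N
  | 0, w, n => pp k Q w.s • n
  | m + 1, w, n => act m w.tail (oP k (w.1 0) • n)

theorem act_add (m : ℕ) (w : Om Q) (a b : N) :
    act (k := k) m w (a + b) = act (k := k) m w a + act (k := k) m w b := by
  induction m generalizing w a b with
  | zero => exact smul_add _ _ _
  | succ m ih => unfold act; rw [smul_add, ih]

theorem act_zero (m : ℕ) (w : Om Q) : act (k := k) m w (0 : N) = 0 := by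
  induction m generalizing w with
  | zero => exact smul_zero _
  | succ m ih => unfold act; rw [smul_zero, ih]

theorem act_pp (m : ℕ) (w : Om Q) (n : N) :
    act (k := k) m w (pp k Q w.s • n) = act (k := k) m w n := by
  cases m with
  | zero => unfold act; rw [← mul_smul, pp_self]
  | succ m => unfold act; rw [← mul_smul]; unfold Om.s; rw [oP_sP]

theorem act_pp_ne (m : ℕ) (w : Om Q) (n : N) {v : Q.V} (h : w.s ≠ v) :
    act (k := k) m w (pp k Q v • n) = 0 := by
  rw [← act_pp, ← mul_smul, pp_ne k Q h, zero_smul, act_zero]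

theorem act_smul [IsScalarTower k (RR k Q) N] (m : ℕ) (w : Om Q) (c : k) (n : N) :
    act (k := k) m w (c • n) = c • act (k := k) m w n := by
  have hc : ∀ (r : RR k Q) (n : N), r • c • n = c • r • n := fun r n => by
    rw [← algebraMap_smul (RR k Q) c n, ← mul_smul, ← Algebra.commutes, mul_smul,
      algebraMap_smul]
  induction m generalizing w n with
  | zero => exact hc _ _
  | succ m ih => unfold act; rw [hc, ih]

theorem tor_of_act {m : ℕ} {n : N} (h : ∀ w : Om Q, act (k := k) m w n = 0) :
    Tor (k := k) (Q := Q) m n := by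
  induction m generalizing n with
  | zero =>
    change n = 0
    rw [← one_smul (RR k Q) n, ← sum_pp, Finset.sum_smul]
    refine Finset.sum_eq_zero fun v _ => ?_
    obtain ⟨w, rfl⟩ := exists_om v
    exact h w
  | succ m ih =>
    refine ⟨fun v hv => ?_, fun e => ih fun w => ?_⟩
    · have hT : ∀ m (n : N), act (k := k) m
        (⟨fun _ => Sum.inr ⟨v, hv⟩, fun _ => rfl⟩ : Om Q) n = pp k Q v • n := by
        intro m
        induction m with
        | zero => intro n; rfl
        | succ m ih =>
          intro n
          exact (ih _).trans (by rw [oP, ← mul_smul, pp_self])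
      exact (hT (m + 1) n).symm.trans (h _)
    · by_cases hw : Q.tgt e = w.s
      · exact h (Om.cons (Sum.inl e) w hw)
      · rw [← act_pp, ← mul_smul, tgt_ga_ne k Q e (Ne.symm hw), zero_smul, act_zero]

variable (N) in
theorem iota_smul [IsScalarTower k (RR k Q) N] (r : RR k Q) (n : N) :
    (Submodule.Quotient.mk (fun w m => act (k := k) m w (r • n)) : Gm k Q N) =
      gAct k Q N (phi k Q r) (Submodule.Quotient.mk (fun w m => act (k := k) m w n)) := by
  induction r using RR_ind generalizing n with
  | h0 a =>
    rw [phi_algebraMap, AlgHom.commutes]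
    refine gm_eq N fun w m hm => ?_
    rw [algebraMap_smul]; exact act_smul m w a n
  | hp v =>
    rw [phi_pp, gAct_p, gP_mk]
    refine gm_eq N fun w m hm => ?_
    change _ = ite _ _ _
    split_ifs with h
    · rw [← h, act_pp]
    · exact act_pp_ne m w n h
  | hg e =>
    rw [phi_ga, gAct_gh, gG_mk]
    refine gm_eq N fun w m hm => ?_
    change _ = dite _ _ _
    split_ifs with h
    · rfl
    · rw [← act_pp, ← mul_smul, tgt_ga_ne k Q e (Ne.symm h), zero_smul, act_zero]
  | hmul x y hx hy =>
    rw [map_mul, map_mul, Module.End.mul_apply, ← hy, ← hx, mul_smul]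
  | hadd x y hx hy =>
    rw [map_add, map_add, LinearMap.add_apply, ← hx, ← hy, add_smul]
    refine (gm_eq N fun w m hm => ?_).trans (Submodule.Quotient.mk_add _)
    exact act_add m w _ _

variable (N) in
/-- The map to germs. -/
noncomputable def iota [IsScalarTower k (RR k Q) N] : N →ₛₗ[phi k Q] GerM k Q N where
  toFun n := (Submodule.Quotient.mk (fun w m => act (k := k) m w n) : Gm k Q N)
  map_add' a b := by
    refine (gm_eq N fun w m hm => ?_).trans (Submodule.Quotient.mk_add _)
    exact act_add m w a b
  map_smul' r n := iota_smul N r n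

end Germs

/-- The kernel of `N → L ⊗ N` is the torsion. -/
theorem exists_tor {N : Type} [AddCommGroup N] [Module (RR k Q) N] {n : N}
    (h : tmk (k := k) (Q := Q) N n = 0) : ∃ m, Tor (k := k) (Q := Q) m n := by
  letI : Module k N := Module.compHom N (algebraMap k (RR k Q))
  haveI : IsScalarTower k (RR k Q) N := ⟨fun a r n => by
    rw [Algebra.smul_def, mul_smul]; rfl⟩
  have h1 : tlift (iota (k := k) (Q := Q) N) (tmk N n) = iota N n := tlift_tmk _ _
  rw [h, map_zero] at h1
  have h2 : (Submodule.Quotient.mk (fun w m => act (k := k) m w n) : Gm k Q N) = 0 := h1.symm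
  rw [Submodule.Quotient.mk_eq_zero] at h2
  obtain ⟨m, hm⟩ := h2
  exact ⟨m, tor_of_act fun w => hm w m le_rfl⟩

/-- Flatness. -/
theorem tm_injective {N N' : Type} [AddCommGroup N] [Module (RR k Q) N]
    [AddCommGroup N'] [Module (RR k Q) N'] (f : N →ₗ[RR k Q] N') (hf : Function.Injective f) :
    Function.Injective (tm f) := by
  rw [← LinearMap.ker_eq_bot, tt_span_eq (LinearMap.ker (tm f)), Submodule.span_eq_bot]
  rintro _ ⟨hx, n, rfl⟩
  have hx : tm f (tmk N n) = 0 := hx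
  rw [tm_tmk] at hx
  obtain ⟨m, hm⟩ := exists_tor hx
  exact (Tor.of_injective f hf hm).map_zero (tmk N)

end Emb
end LPA

namespace LPA

section Simples

variable {k : Type} [Field k] {Q : FinQuiver}
variable {N : Type} [AddCommGroup N] [Module (RR k Q) N]

theorem pp_smul_eq {v : Q.V} {n : N} (hv : pp k Q v • n = n) (w : Q.V) :
    pp k Q w • n = if w = v then n else 0 := by
  split_ifs with h
  · rw [h, hv]
  · rw [← hv, ← mul_smul, pp_ne k Q h, zero_smul]

theorem scal_of {v : Q.V} {n : N} (hv : pp k Q v • n = n) (hg : ∀ e, ga k Q e • n = 0)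
    (y : RR k Q) : ∃ a : k, y • n = algebraMap k (RR k Q) a • n := by
  induction y using RR_ind with
  | h0 a => exact ⟨a, rfl⟩
  | hp w =>
    by_cases h : w = v
    · exact ⟨1, by rw [h, hv, map_one, one_smul]⟩
    · exact ⟨0, by rw [pp_smul_eq hv, if_neg h, map_zero, zero_smul]⟩
  | hg e => exact ⟨0, by rw [hg, map_zero, zero_smul]⟩
  | hmul x y hx hy =>
    obtain ⟨a, ha⟩ := hx
    obtain ⟨b, hb⟩ := hy
    exact ⟨b * a, by rw [mul_smul, hb, ← mul_smul, ← Algebra.commutes, mul_smul, ha, map_mul,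
      mul_smul]⟩
  | hadd x y hx hy =>
    obtain ⟨a, ha⟩ := hx
    obtain ⟨b, hb⟩ := hy
    exact ⟨a + b, by rw [add_smul, ha, hb, map_add, add_smul]⟩

theorem comm_alg (r : RR k Q) (a : k) (n : N) :
    r • algebraMap k (RR k Q) a • n = algebraMap k (RR k Q) a • r • n := by
  rw [← mul_smul, ← Algebra.commutes, mul_smul]

variable (k) in
/-- The generator of `R p_v`. -/
noncomputable def pgen (v : Q.V) : pIdeal k Q v := ⟨pp k Q v, ⟨pp k Q v, pp_self k Q v⟩⟩

theorem pIdeal_eq (v : Q.V) (x : pIdeal k Q v) : x = (x : RR k Q) • pgen k v := by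
  obtain ⟨x, y, rfl⟩ := x
  apply Subtype.ext
  change y * pp k Q v = y * pp k Q v * pp k Q v
  rw [mul_assoc, pp_self]

theorem pgen_pp (v : Q.V) : pp k Q v • pgen k v = pgen k v := Subtype.ext (pp_self k Q v)

variable (k) in
/-- The generator of the cokernel. -/
noncomputable def cgen (v : Q.V) : CokerNu k Q v := Submodule.Quotient.mk (pgen k v)

theorem cgen_pp (v : Q.V) : pp k Q v • cgen k v = cgen k v :=
  congrArg Submodule.Quotient.mk (pgen_pp v)

theorem cgen_ga (v : Q.V) (e : Q.A) : ga k Q e • cgen k v = 0 := by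
  by_cases h : Q.src e = v
  · refine (Submodule.Quotient.mk_eq_zero _).mpr ?_
    refine ⟨Pi.single ⟨e, h⟩ (pgen k (Q.tgt e)), Subtype.ext ?_⟩
    change ∑ e' : {e : Q.A // Q.src e = v}, _ = ga k Q e * pp k Q v
    rw [Finset.sum_eq_single ⟨e, h⟩]
    · rw [Pi.single_eq_same]
      refine (tgt_ga k Q e).trans ?_
      rw [← h, ga_src]
    · intro b _ hb
      rw [Pi.single_eq_of_ne hb]
      exact zero_mul _
    · intro hb; exact absurd (Finset.mem_univ _) hb
  · rw [← cgen_pp, ← mul_smul, ga_src_ne k Q e h, zero_smul]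

theorem cok_eq (v : Q.V) (n : CokerNu k Q v) : ∃ a : k, n = algebraMap k (RR k Q) a • cgen k v := by
  obtain ⟨x, rfl⟩ := Submodule.Quotient.mk_surjective _ n
  rw [pIdeal_eq v x]
  exact scal_of (cgen_pp v) (cgen_ga v) _

theorem cok_tor (v : Q.V) (hv : ¬ IsSink Q v) (n : CokerNu k Q v) :
    Tor (k := k) (Q := Q) 1 n := by
  obtain ⟨a, rfl⟩ := cok_eq v n
  refine ⟨fun w hw => ?_, fun e => ?_⟩
  · rw [comm_alg, pp_smul_eq (cgen_pp v), if_neg, smul_zero]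
    rintro rfl
    exact hv hw
  · change _ = _
    rw [comm_alg, cgen_ga, smul_zero]

theorem tt_subsingleton (h : ∀ n : N, ∃ m, Tor (k := k) (Q := Q) m n) :
    Subsingleton (TT k Q N) := by
  rw [← Submodule.subsingleton_iff (Leavitt k Q), ← subsingleton_iff_bot_eq_top, ← tmk_span,
    eq_comm, Submodule.span_eq_bot]
  rintro _ ⟨n, rfl⟩
  obtain ⟨m, hm⟩ := h n
  exact hm.map_zero (tmk N)

theorem tt_cok {v : Q.V} (hv : ¬ IsSink Q v) (f : N ≃ₗ[RR k Q] CokerNu k Q v) :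
    Subsingleton (TT k Q N) := by
  have := tt_subsingleton (k := k) (Q := Q) (N := CokerNu k Q v) fun n => ⟨1, cok_tor v hv n⟩
  exact (tmEquiv f).toEquiv.subsingleton

variable (k Q N) in
/-- The elements killed by all ghost arrows and sinks. -/
def Kone : Submodule (RR k Q) N where
  carrier := {n | Tor (k := k) (Q := Q) 1 n}
  add_mem' := fun {a b} ha hb => ⟨fun v hv => by rw [smul_add, ha.1 v hv, hb.1 v hv, add_zero],
    fun e => by
      change _ = _
      rw [smul_add, show _ = _ from ha.2 e, show _ = _ from hb.2 e, add_zero]⟩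
  zero_mem' := ⟨fun v _ => smul_zero _, fun e => smul_zero _⟩
  smul_mem' := fun r n hn => by
    have hn : Tor (k := k) (Q := Q) 1 n := hn
    change Tor (k := k) (Q := Q) 1 (r • n)
    induction r using RR_ind generalizing n with
    | h0 a => exact ⟨fun v hv => by rw [comm_alg, hn.1 v hv, smul_zero],
        fun e => by change _ = _; rw [comm_alg, show _ = _ from hn.2 e, smul_zero]⟩
    | hp w =>
      refine ⟨fun v hv => ?_, fun e => ?_⟩
      · by_cases h : v = w
        · rw [← mul_smul, h, pp_self, ← h]; exact hn.1 v hv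
        · rw [← mul_smul, pp_ne k Q h, zero_smul]
      · change _ = _
        by_cases h : Q.src e = w
        · rw [← mul_smul, ← h, ga_src]; exact hn.2 e
        · rw [← mul_smul, ga_src_ne k Q e h, zero_smul]
    | hg e =>
      rw [show _ = _ from hn.2 e]
      exact ⟨fun v _ => smul_zero _, fun e => smul_zero _⟩
    | hmul x y hx hy => rw [mul_smul]; exact hx _ (hy n hn hn) (hy n hn hn)
    | hadd x y hx hy =>
      rw [add_smul]
      have ha := hx n hn hn
      have hb := hy n hn hn
      exact ⟨fun v hv => by rw [smul_add, ha.1 v hv, hb.1 v hv, add_zero],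
        fun e => by
          change _ = _
          rw [smul_add, show _ = _ from ha.2 e, show _ = _ from hb.2 e, add_zero]⟩

theorem exists_tor_one {m : ℕ} {n : N} (h : Tor (k := k) (Q := Q) m n) (hn : n ≠ 0) :
    ∃ n' : N, n' ≠ 0 ∧ Tor (k := k) (Q := Q) 1 n' := by
  induction m generalizing n with
  | zero => exact absurd h hn
  | succ m ih =>
    by_cases hz : ∀ e, ga k Q e • n = 0
    · exact ⟨n, hn, h.1, hz⟩
    · push Not at hz
      obtain ⟨e, he⟩ := hz
      exact ih (h.2 e) he

theorem iso_cok [IsSimpleModule (RR k Q) N] {n : N} (hn : n ≠ 0) (h : Tor (k := k) (Q := Q) 1 n) :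
    ∃ v : Q.V, ¬ IsSink Q v ∧ Nonempty (N ≃ₗ[RR k Q] CokerNu k Q v) := by
  have hK : Kone k Q N = ⊤ := (eq_bot_or_eq_top (Kone k Q N)).resolve_left fun hb =>
    hn ((Submodule.eq_bot_iff _).mp hb n h)
  have hK : ∀ n : N, Tor (k := k) (Q := Q) 1 n := fun n => by
    have : n ∈ Kone k Q N := by rw [hK]; trivial
    exact this
  have : ∃ v, pp k Q v • n ≠ 0 := by
    by_contra! hc
    apply hn
    rw [← one_smul (RR k Q) n, ← sum_pp, Finset.sum_smul]
    exact Finset.sum_eq_zero fun v _ => hc v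
  obtain ⟨v, hv⟩ := this
  refine ⟨v, fun hs => hv (h.1 v hs), ?_⟩
  set n0 := pp k Q v • n with hn0
  have hpv : pp k Q v • n0 = n0 := by rw [hn0, ← mul_smul, pp_self]
  have hgv : ∀ e, ga k Q e • n0 = 0 := (hK n0).2
  let f : CokerNu k Q v →ₗ[RR k Q] N := Submodule.liftQ _
    ((LinearMap.toSpanSingleton (RR k Q) N n0).comp (pIdeal k Q v).subtype) (by
      rintro _ ⟨z, rfl⟩
      change (∑ e : {e : Q.A // Q.src e = v}, ((z e : RR k Q) * ga k Q e.1)) • n0 = 0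
      rw [Finset.sum_smul]
      refine Finset.sum_eq_zero fun e _ => ?_
      rw [mul_smul, hgv, smul_zero])
  have hf : f (cgen k v) = n0 := hpv
  have hinj : Function.Injective f := by
    rw [injective_iff_map_eq_zero]
    intro x hx
    obtain ⟨a, rfl⟩ := cok_eq v x
    rw [map_smul, hf] at hx
    by_cases ha : a = 0
    · rw [ha, map_zero, zero_smul]
    · exfalso
      apply hv
      rw [← one_smul (RR k Q) n0, ← map_one (algebraMap k (RR k Q)), ← inv_mul_cancel₀ ha, map_mul,
        mul_smul, hx, smul_zero]
  have hsurj : Function.Surjective f := by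
    rw [← LinearMap.range_eq_top]
    exact (eq_bot_or_eq_top _).resolve_left fun hb =>
      hv ((Submodule.eq_bot_iff _).mp hb n0 ⟨_, hf⟩)
  exact ⟨(LinearEquiv.ofBijective f ⟨hinj, hsurj⟩).symm⟩

theorem tt_simple [IsSimpleModule (RR k Q) N]
    (h : ¬ ∃ v : Q.V, ¬ IsSink Q v ∧ Nonempty (N ≃ₗ[RR k Q] CokerNu k Q v)) :
    IsSimpleModule (Leavitt k Q) (TT k Q N) := by
  have hinj : ∀ n : N, tmk (k := k) (Q := Q) N n = 0 → n = 0 := by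
    intro n hn
    by_contra hne
    obtain ⟨m, hm⟩ := exists_tor hn
    obtain ⟨n', h1, h2⟩ := exists_tor_one hm hne
    exact h (iso_cok h1 h2)
  have hnt := IsSimpleModule.nontrivial (RR k Q) N
  obtain ⟨n0, hn0⟩ := exists_ne (0 : N)
  have : Nontrivial (TT k Q N) := ⟨⟨tmk N n0, 0, fun h => hn0 (hinj _ h)⟩⟩
  have hS : IsSimpleOrder (Submodule (Leavitt k Q) (TT k Q N)) := {
    eq_bot_or_eq_top := fun U => by
      by_cases hU : ∃ n : N, n ≠ 0 ∧ tmk (k := k) (Q := Q) N n ∈ U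
      · right
        obtain ⟨n, hn, hnU⟩ := hU
        rw [eq_top_iff, ← tmk_span, Submodule.span_le]
        rintro _ ⟨n', rfl⟩
        have : n' ∈ Submodule.span (RR k Q) {n} := by
          rw [IsSimpleModule.span_singleton_eq_top (RR k Q) hn]; trivial
        obtain ⟨r, rfl⟩ := Submodule.mem_span_singleton.mp this
        rw [map_smulₛₗ]
        exact U.smul_mem _ hnU
      · left
        push Not at hU
        rw [tt_span_eq U, Submodule.span_eq_bot]
        rintro _ ⟨hx, n, rfl⟩
        by_cases hn : n = 0
        · rw [hn, map_zero]
        · exact absurd hx (hU n hn) }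
  exact { toIsSimpleOrder := hS }

open Classical in
theorem tt_length_simple [IsSimpleModule (RR k Q) N] :
    Module.length (Leavitt k Q) (TT k Q N) =
      if (∃ v : Q.V, ¬ IsSink Q v ∧ Nonempty (N ≃ₗ[RR k Q] CokerNu k Q v)) then 0 else 1 := by
  split_ifs with h
  · obtain ⟨v, hv, ⟨f⟩⟩ := h
    have := tt_cok hv f
    exact Module.length_eq_zero
  · exact Module.length_eq_one_iff.mpr (tt_simple h)

theorem tt_length_add (A : Submodule (RR k Q) N) :
    Module.length (Leavitt k Q) (TT k Q N) =
      Module.length (Leavitt k Q) (TT k Q A) + Module.length (Leavitt k Q) (TT k Q (N ⧸ A)) :=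
  Module.length_eq_add_of_exact (tm A.subtype) (tm A.mkQ)
    (tm_injective _ A.injective_subtype) (tm_surjective _ A.mkQ_surjective) (tm_exact A)

theorem tt_length_ne_top {N : Type} [iN : AddCommGroup N] [jN : Module (RR k Q) N]
    (h : IsFiniteLength (RR k Q) N) : Module.length (Leavitt k Q) (TT k Q N) ≠ ⊤ := by
  induction h with
  | @of_subsingleton M _ _ _ =>
    have : Subsingleton (TT k Q M) := tt_subsingleton (k := k) (Q := Q) (N := M)
      fun n => ⟨0, Subsingleton.elim n 0⟩
    rw [Module.length_eq_zero]
    exact ENat.zero_ne_top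
  | @of_simple_quotient M _ _ A _ h ih =>
    rw [tt_length_add A, tt_length_simple (N := M ⧸ A)]
    refine WithTop.add_ne_top.mpr ⟨ih, ?_⟩
    split_ifs
    · exact ENat.zero_ne_top
    · exact ENat.one_ne_top

theorem tt_finiteLength {N : Type} [AddCommGroup N] [Module (RR k Q) N]
    (h : IsFiniteLength (RR k Q) N) : IsFiniteLength (Leavitt k Q) (TT k Q N) :=
  Module.length_ne_top_iff.mp (tt_length_ne_top h)

theorem fd_finiteLength {N : Type} [AddCommGroup N] [Module (RR k Q) N] [Module k N]
    [IsScalarTower k (RR k Q) N] [FiniteDimensional k N] : IsFiniteLength (RR k Q) N := by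
  rw [isFiniteLength_iff_isNoetherian_isArtinian]
  exact ⟨isNoetherian_of_tower k inferInstance, isArtinian_of_tower k inferInstance⟩

open Classical in
theorem length_series {ℓ : ℕ} (c : Fin (ℓ + 1) → Submodule (RR k Q) N) (hc : IsCompSeries ℓ c)
    (T : Finset (Fin ℓ)) (hT : ∀ i : Fin ℓ, (i ∈ T ↔ ∃ v : Q.V, ¬ IsSink Q v ∧
            Nonempty (SeriesFactor c i ≃ₗ[RR k Q] CokerNu k Q v))) :
    Module.length (Leavitt k Q) (TT k Q N) = ((ℓ - T.card : ℕ) : ℕ∞) := by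
  have key : ∀ i : Fin (ℓ + 1), Module.length (Leavitt k Q) (TT k Q (c i)) =
      ((Finset.univ.filter (fun j : Fin ℓ => j.castSucc < i ∧ j ∉ T)).card : ℕ∞) := by
    intro i
    induction i using Fin.induction with
    | zero =>
      have : Subsingleton (TT k Q (c 0)) := tt_subsingleton fun n => ⟨0, by
        obtain ⟨n, hn⟩ := n
        rw [hc.1] at hn
        exact Subtype.ext ((Submodule.mem_bot _).mp hn)⟩
      rw [Module.length_eq_zero, Finset.filter_false_of_mem]
      · simp
      · intro j _ hj
        exact absurd hj.1 (by simp)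
    | succ i ih =>
      obtain ⟨hlt, hs⟩ := hc.2.2 i
      rw [tt_length_add (Submodule.comap (c i.succ).subtype (c i.castSucc)),
        (tmEquiv (Submodule.comapSubtypeEquivOfLe hlt.le)).length_eq, ih, tt_length_simple]
      by_cases hi : i ∈ T
      · rw [if_pos ((hT i).mp hi), add_zero]
        congr 2
        ext j
        simp only [Finset.mem_filter, Finset.mem_univ, true_and, Fin.lt_def, Fin.val_castSucc,
          Fin.val_succ]
        constructor
        · rintro ⟨h1, h2⟩; exact ⟨by omega, h2⟩
        · rintro ⟨h1, h2⟩
          refine ⟨?_, h2⟩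
          have : j ≠ i := fun h => h2 (h ▸ hi)
          have : (j : ℕ) ≠ i := fun h => this (Fin.ext h)
          omega
      · rw [if_neg (fun h => hi ((hT i).mpr h))]
        have : (Finset.univ.filter (fun j : Fin ℓ => j.castSucc < i.succ ∧ j ∉ T)) =
            insert i (Finset.univ.filter (fun j : Fin ℓ => j.castSucc < i.castSucc ∧ j ∉ T)) := by
          ext j
          simp only [Finset.mem_filter, Finset.mem_univ, true_and, Fin.lt_def, Fin.val_castSucc,
            Fin.val_succ, Finset.mem_insert]
          constructor
          · rintro ⟨h1, h2⟩
            by_cases hj : j = i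
            · exact Or.inl hj
            · have : (j : ℕ) ≠ i := fun h => hj (Fin.ext h)
              exact Or.inr ⟨by omega, h2⟩
          · rintro (rfl | ⟨h1, h2⟩)
            · exact ⟨by omega, hi⟩
            · exact ⟨by omega, h2⟩
        rw [this, Finset.card_insert_of_notMem (by simp)]
        push_cast
        rfl
  have h1 := key (Fin.last ℓ)
  rw [hc.2.1, (tmEquiv (Submodule.topEquiv (R := RR k Q) (M := N))).length_eq] at h1
  rw [h1]
  congr 1
  have : (Finset.univ.filter (fun j : Fin ℓ => j.castSucc < Fin.last ℓ ∧ j ∉ T)) = Tᶜ := by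
    ext j
    simp [Fin.castSucc_lt_last]
  rw [this, Finset.card_compl, Fintype.card_fin]

theorem exists_compSeries {R M : Type} [Ring R] [AddCommGroup M] [Module R M] {n : ℕ}
    (h : Module.length R M = n) : ∃ c : Fin (n + 1) → Submodule R M, IsCompSeries n c := by
  have hf : IsFiniteLength R M := Module.length_ne_top_iff.mp (by rw [h]; simp)
  obtain ⟨s, hs0, hs1⟩ := isFiniteLength_iff_exists_compositionSeries.mp hf
  have hl := Module.length_compositionSeries s hs0 hs1
  rw [h] at hl
  have hl : n = s.length := by exact_mod_cast hl.symm
  subst hl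
  refine ⟨fun i => s i, hs0, hs1, fun i => ?_⟩
  have := s.step i
  exact ⟨this.lt, (covBy_iff_quot_is_simple this.le).mp this⟩

end Simples
end LPA

namespace LPA

section Reps

variable {k : Type} [Field k] {Q : FinQuiver}

/-- A representation of the inverse quiver. -/
structure Rp (k : Type) [Field k] (Q : FinQuiver) (N : Type) [AddCommGroup N] [Module k N] where
  P : Q.V → Module.End k N
  G : Q.A → Module.End k N
  P_self : ∀ v x, P v (P v x) = P v x
  P_ne : ∀ v w, v ≠ w → ∀ x, P v (P w x) = 0
  P_sum : ∀ x, ∑ v, P v x = x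
  P_G : ∀ e x, P (Q.tgt e) (G e x) = G e x
  G_P : ∀ e x, G e (P (Q.src e) x) = G e x

variable {N : Type} [AddCommGroup N] [Module k N] (ρ : Rp k Q N)

/-- The action of the path algebra. -/
noncomputable def Rp.hom : RR k Q →ₐ[k] Module.End k N :=
  RingQuot.liftAlgHom k ⟨((FreeAlgebra.lift k fun g =>
    match g with
    | PathGen.vertex v => ρ.P v
    | PathGen.edge e => ρ.G e : FreeAlgebra k (PathGen Q.rev) →ₐ[k] Module.End k N)), by
      intro x y h
      induction h with
      | vertex_mul_self v =>
          simp only [map_mul, FreeAlgebra.lift_ι_apply]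
          exact LinearMap.ext fun x => ρ.P_self v x
      | vertex_mul_ne v w h =>
          simp only [map_mul, map_zero, FreeAlgebra.lift_ι_apply]
          exact LinearMap.ext fun x => ρ.P_ne v w h x
      | sum_vertex =>
          simp only [map_sum, map_one, FreeAlgebra.lift_ι_apply]
          refine LinearMap.ext fun x => ?_
          exact (LinearMap.sum_apply _ _ _).trans (ρ.P_sum x)
      | src_mul e =>
          simp only [map_mul, FreeAlgebra.lift_ι_apply]
          exact LinearMap.ext fun x => ρ.P_G e x
      | mul_tgt e =>
          simp only [map_mul, FreeAlgebra.lift_ι_apply]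
          exact LinearMap.ext fun x => ρ.G_P e x⟩

theorem Rp.hom_pp (v : Q.V) : ρ.hom (pp k Q v) = ρ.P v :=
  (RingQuot.liftAlgHom_mkAlgHom_apply k _ _ _).trans (FreeAlgebra.lift_ι_apply _ _)

theorem Rp.hom_ga (e : Q.A) : ρ.hom (ga k Q e) = ρ.G e :=
  (RingQuot.liftAlgHom_mkAlgHom_apply k _ _ _).trans (FreeAlgebra.lift_ι_apply _ _)

/-- The module attached to a representation. -/
def Rp.Md (_ρ : Rp k Q N) : Type := N

noncomputable instance : AddCommGroup ρ.Md := inferInstanceAs (AddCommGroup N)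
noncomputable instance : Module k ρ.Md := inferInstanceAs (Module k N)
noncomputable instance : Module (RR k Q) ρ.Md :=
  letI : Module (Module.End k N) ρ.Md := inferInstanceAs (Module (Module.End k N) N)
  Module.compHom ρ.Md ρ.hom.toRingHom

/-- Passing to the module. -/
def Rp.mkM : N ≃ₗ[k] ρ.Md := LinearEquiv.refl k N

theorem Rp.smul_mkM (r : RR k Q) (n : N) : r • ρ.mkM n = ρ.mkM (ρ.hom r n) := rfl

theorem Rp.pp_mkM (v : Q.V) (n : N) : pp k Q v • ρ.mkM n = ρ.mkM (ρ.P v n) := by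
  rw [ρ.smul_mkM, ρ.hom_pp]

theorem Rp.ga_mkM (v : Q.A) (n : N) : ga k Q v • ρ.mkM n = ρ.mkM (ρ.G v n) := by
  rw [ρ.smul_mkM, ρ.hom_ga]

theorem Rp.alg_mkM (a : k) (n : N) : algebraMap k (RR k Q) a • ρ.mkM n = ρ.mkM (a • n) := by
  rw [ρ.smul_mkM, AlgHom.commutes]; rfl

instance : IsScalarTower k (RR k Q) ρ.Md := ⟨fun a r n => by
  obtain ⟨n, rfl⟩ := ρ.mkM.surjective n
  rw [ρ.smul_mkM, map_smul, ρ.smul_mkM]; rfl⟩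

/-- Checking linearity on generators. -/
theorem smul_of_gen {R' : Type} [Ring R'] [Algebra k R'] (σ : RR k Q →+* R')
    (hσ : ∀ a, σ (algebraMap k _ a) = algebraMap k R' a)
    {A B : Type} [AddCommGroup A] [Module (RR k Q) A] [AddCommGroup B] [Module R' B]
    (f : A →+ B) (h0 : ∀ (c : k) a, f (algebraMap k (RR k Q) c • a) = algebraMap k R' c • f a)
    (hp : ∀ v a, f (pp k Q v • a) = σ (pp k Q v) • f a)
    (hg : ∀ e a, f (ga k Q e • a) = σ (ga k Q e) • f a) (r : RR k Q) (a : A) :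
    f (r • a) = σ r • f a := by
  induction r using RR_ind generalizing a with
  | h0 c => rw [h0, hσ]
  | hp v => exact hp v a
  | hg v => exact hg v a
  | hmul x y hx hy => rw [mul_smul, hx, hy, map_mul, mul_smul]
  | hadd x y hx hy => rw [add_smul, map_add, hx, hy, map_add, add_smul]

end Reps

section Extn

variable {k : Type} [Field k] {Q : FinQuiver}

/-- Data for extending a representation by projectives. -/
structure Ext (k : Type) [Field k] (Q : FinQuiver) (V : Type) [AddCommGroup V] [Module k V]
    (J : Type) where
  a : J → Q.A
  pV : Q.V → V →ₗ[k] V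
  q : Q.A → V →ₗ[k] V
  κ : J → V →ₗ[k] k
  pV_self : ∀ u x, pV u (pV u x) = pV u x
  pV_ne : ∀ u w, u ≠ w → ∀ x, pV u (pV w x) = 0
  pV_sum : ∀ x, ∑ u, pV u x = x
  q_src : ∀ e x, q e (pV (Q.src e) x) = q e x
  q_tgt : ∀ e x, pV (Q.tgt e) (q e x) = q e x
  κ_src : ∀ j x, κ j (pV (Q.src (a j)) x) = κ j x

variable {V : Type} [AddCommGroup V] [Module k V] {J : Type} (X : Ext k Q V J)

/-- The projective part. -/
abbrev Ext.P0 : Type := (j : J) → pIdeal k Q (Q.tgt (X.a j))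

/-- Scalar multiplication as a `k`-linear map. -/
noncomputable def Ext.sm (r : RR k Q) : X.P0 →ₗ[k] X.P0 where
  toFun x := r • x
  map_add' := smul_add r
  map_smul' a x := by
    rw [RingHom.id_apply, ← algebraMap_smul (RR k Q) a x, comm_alg, algebraMap_smul]

/-- The connecting maps. -/
noncomputable def Ext.D (e : Q.A) : V →ₗ[k] X.P0 := LinearMap.pi fun j =>
  if X.a j = e then
    (LinearMap.toSpanSingleton k (pIdeal k Q (Q.tgt (X.a j))) (pgen k (Q.tgt (X.a j)))).comp (X.κ j)
  else 0

theorem Ext.D_apply (e : Q.A) (x : V) (j : J) :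
    X.D e x j = if X.a j = e then X.κ j x • pgen k (Q.tgt (X.a j)) else 0 := by
  unfold Ext.D
  rw [LinearMap.pi_apply]
  split_ifs <;> rfl

/-- The extended representation. -/
noncomputable def Ext.rp : Rp k Q (V × X.P0) where
  P u := LinearMap.prodMap (X.pV u) (X.sm (pp k Q u))
  G e := LinearMap.prodMap (X.q e) (X.sm (ga k Q e)) +
    (LinearMap.inr k V X.P0).comp ((X.D e).comp (LinearMap.fst k V X.P0))
  P_self u x := Prod.ext (X.pV_self u x.1) (by
    change pp k Q u • pp k Q u • x.2 = pp k Q u • x.2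
    rw [← mul_smul, pp_self])
  P_ne u w h x := Prod.ext (X.pV_ne u w h x.1) (by
    change pp k Q u • pp k Q w • x.2 = 0
    rw [← mul_smul, pp_ne k Q h, zero_smul])
  P_sum x := Prod.ext (by
      rw [Prod.fst_sum]; exact X.pV_sum x.1) (by
      rw [Prod.snd_sum]
      change ∑ u, pp k Q u • x.2 = x.2
      rw [← Finset.sum_smul, sum_pp, one_smul])
  P_G e x := Prod.ext (by
      change X.pV _ (X.q e x.1 + 0) = X.q e x.1 + 0
      rw [add_zero, X.q_tgt]) (by
      change pp k Q _ • (ga k Q e • x.2 + X.D e x.1) = ga k Q e • x.2 + X.D e x.1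
      rw [smul_add, ← mul_smul, tgt_ga]
      congr 1
      funext j
      rw [Pi.smul_apply, X.D_apply]
      split_ifs with h
      · rw [← algebraMap_smul (RR k Q), comm_alg, ← h, pgen_pp]
      · rw [smul_zero])
  G_P e x := Prod.ext (by
      change X.q e (X.pV _ x.1) + 0 = X.q e x.1 + 0
      rw [X.q_src]) (by
      change ga k Q e • pp k Q _ • x.2 + X.D e (X.pV _ x.1) = ga k Q e • x.2 + X.D e x.1
      rw [← mul_smul, ga_src]
      congr 1
      funext j
      rw [X.D_apply, X.D_apply]
      split_ifs with h
      · rw [← h, X.κ_src]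
      · rfl)

/-- The extended module. -/
abbrev Ext.B : Type := X.rp.Md

theorem Ext.pp_mk (u : Q.V) (x : V) (y : X.P0) :
    pp k Q u • X.rp.mkM (x, y) = X.rp.mkM (X.pV u x, pp k Q u • y) := X.rp.pp_mkM _ _

theorem Ext.ga_mk (e : Q.A) (x : V) (y : X.P0) :
    ga k Q e • X.rp.mkM (x, y) = X.rp.mkM (X.q e x, ga k Q e • y + X.D e x) := by
  rw [X.rp.ga_mkM]
  congr 1
  exact Prod.ext (add_zero _) rfl

theorem Ext.alg_mk (c : k) (x : V) (y : X.P0) :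
    algebraMap k (RR k Q) c • X.rp.mkM (x, y) =
      X.rp.mkM (c • x, algebraMap k (RR k Q) c • y) := by
  rw [X.rp.alg_mkM, algebraMap_smul]; rfl

/-- The inclusion of the projective part. -/
noncomputable def Ext.inr : X.P0 →ₗ[RR k Q] X.B where
  toFun y := X.rp.mkM (0, y)
  map_add' x y := by
    rw [← map_add, Prod.mk_add_mk, add_zero]
  map_smul' r y := by
    refine smul_of_gen (RingHom.id _) (fun _ => rfl)
      ((X.rp.mkM.toLinearMap.comp (LinearMap.inr k V X.P0)).toAddMonoidHom) ?_ ?_ ?_ r y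
    · intro c y
      change X.rp.mkM (0, _) = algebraMap k (RR k Q) c • X.rp.mkM (0, y)
      rw [X.alg_mk, smul_zero]; rfl
    · intro u y
      change X.rp.mkM (0, _) = pp k Q u • X.rp.mkM (0, y)
      rw [X.pp_mk, map_zero]; rfl
    · intro e y
      change X.rp.mkM (0, _) = ga k Q e • X.rp.mkM (0, y)
      rw [X.ga_mk, map_zero, map_zero, add_zero]; rfl

theorem Ext.inr_inj : Function.Injective X.inr := fun x y h =>
  (Prod.mk.inj (X.rp.mkM.injective h)).2

theorem Ext.fd [FiniteDimensional k V] : FiniteDimensional k (X.B ⧸ LinearMap.range X.inr) := by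
  let f : V →ₗ[k] (X.B ⧸ LinearMap.range X.inr) :=
    ((LinearMap.range X.inr).mkQ.restrictScalars k).comp
      (X.rp.mkM.toLinearMap.comp (LinearMap.inl k V X.P0))
  refine Module.Finite.of_surjective f ?_
  intro z
  obtain ⟨z, rfl⟩ := Submodule.Quotient.mk_surjective _ z
  obtain ⟨⟨x, y⟩, rfl⟩ := X.rp.mkM.surjective z
  refine ⟨x, ?_⟩
  change Submodule.Quotient.mk (X.rp.mkM (x, 0)) = _
  rw [Submodule.Quotient.eq]
  refine ⟨-y, ?_⟩
  change X.rp.mkM (0, -y) = _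
  rw [← map_sub]
  congr 1
  exact Prod.ext (sub_self _).symm (zero_sub _).symm

variable {M : Type} [AddCommGroup M] [Module (Leavitt k Q) M] [Module k M]
  [IsScalarTower k (Leavitt k Q) M] [Fintype J]

theorem L_comm (r : Leavitt k Q) (a : k) (x : M) : r • a • x = a • r • x := by
  rw [← algebraMap_smul (Leavitt k Q) a x, ← mul_smul, ← Algebra.commutes, mul_smul,
    algebraMap_smul]

/-- The comparison map. -/
noncomputable def Ext.piAdd (ι : V →ₗ[k] M) (c : J → M) : X.B →+ M where
  toFun z := ι (X.rp.mkM.symm z).1 + ∑ j, phi k Q ((X.rp.mkM.symm z).2 j : RR k Q) • c j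
  map_zero' := by simp
  map_add' x y := by
    simp only [map_add, Prod.fst_add, Prod.snd_add, Pi.add_apply, Submodule.coe_add, add_smul,
      Finset.sum_add_distrib]
    abel

theorem Ext.piAdd_mk (ι : V →ₗ[k] M) (c : J → M) (x : V) (y : X.P0) :
    X.piAdd ι c (X.rp.mkM (x, y)) = ι x + ∑ j, phi k Q (y j : RR k Q) • c j := rfl

theorem sum_phi_smul (c : J → M) (r : RR k Q) (y : X.P0) :
    ∑ j, phi k Q ((r • y) j : RR k Q) • c j = phi k Q r • ∑ j, phi k Q (y j : RR k Q) • c j := by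
  rw [Finset.smul_sum]
  refine Finset.sum_congr rfl fun j _ => ?_
  rw [← mul_smul, ← map_mul]; rfl

/-- The comparison map, as a semilinear map. -/
noncomputable def Ext.pi (ι : V →ₗ[k] M) (c : J → M)
    (hc : ∀ j, Leavitt.p k Q (Q.tgt (X.a j)) • c j = c j)
    (hp : ∀ u x, ι (X.pV u x) = Leavitt.p k Q u • ι x)
    (hg : ∀ e x, Leavitt.gh k Q e • ι x =
      ι (X.q e x) + ∑ j, if X.a j = e then X.κ j x • c j else 0) : X.B →ₛₗ[phi k Q] M :=
  { X.piAdd ι c with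
    map_smul' := fun r z => by
      refine smul_of_gen (phi k Q) (phi_algebraMap k Q) (X.piAdd ι c) ?_ ?_ ?_ r z
      · rintro a z
        obtain ⟨⟨x, y⟩, rfl⟩ := X.rp.mkM.surjective z
        rw [X.alg_mk, X.piAdd_mk, X.piAdd_mk, sum_phi_smul, phi_algebraMap, smul_add, map_smul,
          algebraMap_smul, algebraMap_smul]
      · rintro u z
        obtain ⟨⟨x, y⟩, rfl⟩ := X.rp.mkM.surjective z
        rw [X.pp_mk, X.piAdd_mk, X.piAdd_mk, sum_phi_smul, phi_pp, smul_add, hp]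
      · rintro e z
        obtain ⟨⟨x, y⟩, rfl⟩ := X.rp.mkM.surjective z
        rw [X.ga_mk, X.piAdd_mk, X.piAdd_mk]
        simp only [Pi.add_apply, Submodule.coe_add, map_add, add_smul, Finset.sum_add_distrib]
        rw [sum_phi_smul, phi_ga, smul_add, hg, add_assoc]
        congr 1
        rw [add_comm]
        congr 1
        refine Finset.sum_congr rfl fun j _ => ?_
        rw [X.D_apply]
        split_ifs with h
        · rw [← algebraMap_smul (RR k Q), Submodule.coe_smul, smul_eq_mul, map_mul,
            phi_algebraMap, mul_smul, algebraMap_smul]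
          change _ • phi k Q (pp k Q (Q.tgt (X.a j))) • c j = _
          rw [phi_pp, hc]
        · rw [Submodule.coe_zero, map_zero, zero_smul] }

theorem Ext.pi_mk (ι : V →ₗ[k] M) (c : J → M)
    (hc : ∀ j, Leavitt.p k Q (Q.tgt (X.a j)) • c j = c j)
    (hp : ∀ u x, ι (X.pV u x) = Leavitt.p k Q u • ι x)
    (hg : ∀ e x, Leavitt.gh k Q e • ι x =
      ι (X.q e x) + ∑ j, if X.a j = e then X.κ j x • c j else 0) (x : V) :
    X.pi ι c hc hp hg (X.rp.mkM (x, 0)) = ι x := by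
  refine (X.piAdd_mk ι c x 0).trans ?_
  simp

end Extn

end LPA

namespace LPA

section Constr

variable {k : Type} [Field k] {Q : FinQuiver}
variable {M : Type} [AddCommGroup M] [Module (Leavitt k Q) M] [Module k M]
  [IsScalarTower k (Leavitt k Q) M]

/-- Compatibility of an additive map with the action on a subspace. -/
structure Cpt {B : Type} [AddCommGroup B] [Module (RR k Q) B] (V : Submodule k M)
    (i : M →+ B) : Prop where
  alg : ∀ (a : k) x, algebraMap k (RR k Q) a • i x = i (a • x)
  vert : ∀ u, ∀ x ∈ V, pp k Q u • i x = i (Leavitt.p k Q u • x)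
  gho : ∀ e, ∀ x ∈ V, Leavitt.gh k Q e • x ∈ V → ga k Q e • i x = i (Leavitt.gh k Q e • x)

/-- The `k`-linear operator attached to an element of the Leavitt path algebra. -/
noncomputable def Lop (M : Type) [AddCommGroup M] [Module (Leavitt k Q) M] [Module k M]
    [IsScalarTower k (Leavitt k Q) M] (r : Leavitt k Q) : M →ₗ[k] M where
  toFun x := r • x
  map_add' := smul_add r
  map_smul' a x := L_comm r a x

theorem Lop_apply (r : Leavitt k Q) (x : M) : Lop M r x = r • x := rfl

theorem exists_B (V : Submodule k M) [FiniteDimensional k V]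
    (hV : ∀ v, ∀ x ∈ V, Leavitt.p k Q v • x ∈ V) :
    ∃ (J : Type) (_ : Fintype J) (t : J → Q.V) (B : Type) (_ : AddCommGroup B)
      (_ : Module (RR k Q) B) (_ : Module k B) (_ : IsScalarTower k (RR k Q) B)
      (inr : ((j : J) → pIdeal k Q (t j)) →ₗ[RR k Q] B) (π : B →ₛₗ[phi k Q] M) (i : M →+ B),
      Function.Injective inr ∧ FiniteDimensional k (B ⧸ LinearMap.range inr) ∧ Cpt (Q := Q) V i ∧
      (∀ x ∈ V, π (i x) = x) ∧ Submodule.span (RR k Q) (Set.image i V) = ⊤ := by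
  classical
  obtain ⟨ρ, hρ⟩ := LinearMap.exists_leftInverse_of_injective V.subtype
    (LinearMap.ker_eq_bot.mpr V.injective_subtype)
  have hρ : ∀ x, ∀ h : x ∈ V, ρ x = ⟨x, h⟩ := fun x h => LinearMap.congr_fun hρ ⟨x, h⟩
  -- operators on `V`
  let pV : Q.V → V →ₗ[k] V := fun u => (Lop M (Leavitt.p k Q u)).restrict (hV u)
  let q : Q.A → V →ₗ[k] V := fun e =>
    (pV (Q.tgt e)).comp (ρ.comp ((Lop M (Leavitt.gh k Q e)).comp V.subtype))
  let δ : Q.A → V →ₗ[k] M := fun e =>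
    (Lop M (Leavitt.gh k Q e)).comp V.subtype - V.subtype.comp (q e)
  have hpV : ∀ u (x : V), ((pV u x : V) : M) = Leavitt.p k Q u • (x : M) := fun _ _ => rfl
  have hq : ∀ e (x : V), q e x = pV (Q.tgt e) (ρ (Leavitt.gh k Q e • (x : M))) := fun _ _ => rfl
  have hδ : ∀ e (x : V), δ e x = Leavitt.gh k Q e • (x : M) - (q e x : M) := fun _ _ => rfl
  have pV_self : ∀ u x, pV u (pV u x) = pV u x := fun u x => Subtype.ext (by
    rw [hpV, hpV, ← mul_smul, Leavitt.p_mul_self])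
  have pV_ne : ∀ u w, u ≠ w → ∀ x, pV u (pV w x) = 0 := fun u w h x => Subtype.ext (by
    rw [hpV, hpV, ← mul_smul, Leavitt.p_mul_ne k Q u w h, zero_smul]; rfl)
  have pV_sum : ∀ x, ∑ u, pV u x = x := fun x => Subtype.ext (by
    rw [AddSubmonoidClass.coe_finset_sum]
    simp only [hpV]
    rw [← Finset.sum_smul, Leavitt.sum_p, one_smul])
  have q_src : ∀ e x, q e (pV (Q.src e) x) = q e x := fun e x => by
    rw [hq, hq, hpV, ← mul_smul, Leavitt.gh_mul_src]
  have δ_src : ∀ e x, δ e (pV (Q.src e) x) = δ e x := fun e x => by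
    rw [hδ, hδ, q_src, hpV, ← mul_smul, Leavitt.gh_mul_src]
  have δ_tgt : ∀ e x, Leavitt.p k Q (Q.tgt e) • δ e x = δ e x := fun e x => by
    rw [hδ, smul_sub, ← mul_smul, Leavitt.tgt_mul_gh, ← hpV, hq, pV_self]
  have δ_zero : ∀ e (x : V), Leavitt.gh k Q e • (x : M) ∈ V → 
      (q e x : M) = Leavitt.gh k Q e • (x : M) := fun e x h => by
    rw [hq, hpV, hρ _ h, ← mul_smul, Leavitt.tgt_mul_gh]
  -- bases
  let b : (e : Q.A) → Module.Basis (Fin (Module.finrank k (LinearMap.range (δ e)))) k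
    (LinearMap.range (δ e)) := fun e => Module.finBasis k _
  let J : Type := Σ e : Q.A, Fin (Module.finrank k (LinearMap.range (δ e)))
  let κ : J → V →ₗ[k] k := fun j => ((b j.1).coord j.2).comp (δ j.1).rangeRestrict
  let c : J → M := fun j => (b j.1 j.2 : M)
  have hc : ∀ j : J, Leavitt.p k Q (Q.tgt j.1) • c j = c j := by
    rintro ⟨e, j⟩
    obtain ⟨x, hx⟩ := (b e j).2
    change _ • (b e j : M) = (b e j : M)
    rw [← hx, δ_tgt]
  have hκ : ∀ (j : J) (x : V), κ j x = (b j.1).repr ((δ j.1).rangeRestrict x) j.2 :=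
    fun _ _ => rfl
  have κ_src : ∀ (j : J) x, κ j (pV (Q.src j.1) x) = κ j x := fun j x => by
    rw [hκ, hκ]; congr 2; exact Subtype.ext (δ_src j.1 x)
  have κ_zero : ∀ (j : J) (x : V), δ j.1 x = 0 → κ j x = 0 := fun j x h => by
    rw [hκ, show (δ j.1).rangeRestrict x = 0 from Subtype.ext h, map_zero]; rfl
  let X : Ext k Q V J :=
    { a := fun j => j.1, pV := pV, q := q, κ := κ, pV_self := pV_self, pV_ne := pV_ne
      pV_sum := pV_sum, q_src := q_src, q_tgt := fun e x => pV_self _ _, κ_src := κ_src }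
  have hg : ∀ e (x : V), Leavitt.gh k Q e • V.subtype x =
      V.subtype (q e x) + ∑ j : J, if j.1 = e then κ j x • c j else 0 := by
    intro e x
    have h1 : ∑ j : J, (if j.1 = e then κ j x • c j else 0) = δ e x := by
      rw [Fintype.sum_sigma, Finset.sum_eq_single e]
      · simp only [if_true]
        have := congrArg Subtype.val ((b e).sum_repr ((δ e).rangeRestrict x))
        rw [AddSubmonoidClass.coe_finset_sum] at this
        exact this
      · intro e' _ he'
        exact Finset.sum_eq_zero fun j _ => if_neg he'
      · intro h; exact absurd (Finset.mem_univ _) h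
    rw [h1, hδ]
    exact (add_sub_cancel _ _).symm
  let i : M →+ X.B := (X.rp.mkM.toLinearMap.comp ((LinearMap.inl k V X.P0).comp ρ)).toAddMonoidHom
  have hi : ∀ x, i x = X.rp.mkM (ρ x, 0) := fun _ => rfl
  refine ⟨J, inferInstance, fun j => Q.tgt j.1, X.B, inferInstance, inferInstance, inferInstance,
    inferInstance, X.inr, X.pi V.subtype c hc (fun _ _ => rfl) hg, i, X.inr_inj, X.fd, ?_, ?_, ?_⟩
  · refine ⟨fun a x => ?_, fun u x hx => ?_, fun e x hx hx' => ?_⟩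
    · rw [hi, hi, X.alg_mk, smul_zero, map_smul]
    · rw [hi, hi, X.pp_mk, smul_zero, hρ x hx, hρ _ (hV u x hx)]; rfl
    · rw [hi, hi, X.ga_mk, smul_zero, zero_add, hρ x hx, hρ _ hx']
      congr 2
      · exact Subtype.ext (δ_zero e ⟨x, hx⟩ hx')
      · funext j
        rw [X.D_apply]
        split_ifs with h
        · have : X.κ j ⟨x, hx⟩ = 0 := κ_zero j ⟨x, hx⟩ (by
            have h : j.1 = e := h
            rw [h, hδ, δ_zero e _ hx', sub_self])
          rw [this, zero_smul]; rfl
        · rfl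
  · intro x hx
    rw [hi, hρ x hx]
    exact X.pi_mk V.subtype c hc (fun _ _ => rfl) hg ⟨x, hx⟩
  · rw [eq_top_iff]
    rintro z -
    obtain ⟨⟨x, y⟩, rfl⟩ := X.rp.mkM.surjective z
    have hx : ∀ x : V, X.rp.mkM (x, 0) ∈ Submodule.span (RR k Q) (Set.image i (V : Set M)) := fun x =>
      Submodule.subset_span ⟨x, x.2, by rw [hi, hρ _ x.2]⟩
    have hj : ∀ j : J, X.inr (Pi.single j (pgen k (Q.tgt j.1))) ∈
        Submodule.span (RR k Q) (Set.image i (V : Set M)) := by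
      rintro ⟨e, j⟩
      obtain ⟨x, hx'⟩ := (b e j).2
      have h2 : X.inr (Pi.single (⟨e, j⟩ : J) (pgen k (Q.tgt e))) =
          ga k Q e • X.rp.mkM (x, 0) - X.rp.mkM (q e x, 0) := by
        rw [X.ga_mk, ← map_sub]
        change X.rp.mkM (0, _) = _
        congr 1
        refine Prod.ext (sub_self _).symm ?_
        change _ = ga k Q e • (0 : X.P0) + X.D e x - 0
        rw [smul_zero, zero_add, sub_zero]
        funext j'
        rw [X.D_apply]
        obtain ⟨e', j'⟩ := j'
        by_cases he : e' = e
        · subst he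
          rw [if_pos rfl]
          have h3 : X.κ ⟨e', j'⟩ x = if j = j' then 1 else 0 := by
            change (b e').repr ((δ e').rangeRestrict x) j' = _
            rw [show (δ e').rangeRestrict x = b e' j from Subtype.ext hx', (b e').repr_self,
              Finsupp.single_apply]
          rw [h3]
          by_cases hjj : j = j'
          · subst hjj
            rw [if_pos rfl, one_smul]
            exact Pi.single_eq_same (M := fun j : J => pIdeal k Q (Q.tgt j.1)) _ _
          · rw [if_neg hjj, zero_smul]
            refine Pi.single_eq_of_ne (M := fun j : J => pIdeal k Q (Q.tgt j.1)) ?_ _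
            intro h
            exact hjj (eq_of_heq (Sigma.mk.inj h).2).symm
        · rw [if_neg he]
          refine Pi.single_eq_of_ne (M := fun j : J => pIdeal k Q (Q.tgt j.1)) ?_ _
          intro h
          exact he (Sigma.mk.inj h).1
      rw [h2]
      exact Submodule.sub_mem _ (Submodule.smul_mem _ _ (hx x)) (hx _)
    have hsplit : X.rp.mkM (x, y) = X.rp.mkM (x, 0) + X.inr y := by
      change _ = X.rp.mkM (x, 0) + X.rp.mkM (0, y)
      rw [← map_add, Prod.mk_add_mk, add_zero, zero_add]
    rw [hsplit]
    refine Submodule.add_mem _ (hx x) ?_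
    have hy : y = ∑ j : J, (y j : RR k Q) • 
        (Pi.single j (pgen k (Q.tgt j.1)) : (j : J) → pIdeal k Q (Q.tgt j.1)) := by
      funext j
      rw [Finset.sum_apply, Finset.sum_eq_single j]
      · rw [Pi.smul_apply, Pi.single_eq_same]; exact pIdeal_eq _ _
      · intro j' _ hne
        rw [Pi.smul_apply, Pi.single_eq_of_ne hne.symm, smul_zero]
      · intro h; exact absurd (Finset.mem_univ _) h
    rw [hy, map_sum]
    refine Submodule.sum_mem _ fun j _ => ?_
    rw [map_smul]
    exact Submodule.smul_mem _ _ (hj j)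

end Constr
end LPA

namespace LPA

section Chain

variable {k : Type} [Field k] {Q : FinQuiver}
variable {M : Type} [AddCommGroup M] [Module (Leavitt k Q) M] [Module k M]
  [IsScalarTower k (Leavitt k Q) M] {n : ℕ}

variable (k Q) in
/-- The filtration of `M` attached to a family of generators. -/
noncomputable def Wc (m : Fin n → M) : ℕ → Submodule k M
  | 0 => Submodule.span k (Set.range fun x : Q.V × Fin n => Leavitt.p k Q x.1 • m x.2)
  | d + 1 => Wc m d ⊔ ⨆ e : Q.A, (Wc m d).map (Lop M (Leavitt.gh k Q e))

variable (m : Fin n → M)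

theorem Wc_fd (d : ℕ) : FiniteDimensional k (Wc k Q m d) := by
  induction d with
  | zero => exact FiniteDimensional.span_of_finite k (Set.finite_range _)
  | succ d ih =>
    change FiniteDimensional k
      ↥(Wc k Q m d ⊔ ⨆ e : Q.A, (Wc k Q m d).map (Lop M (Leavitt.gh k Q e)))
    infer_instance

theorem Wc_succ (d : ℕ) : Wc k Q m d ≤ Wc k Q m (d + 1) := le_sup_left

theorem Wc_mono : Monotone (Wc k Q m) := monotone_nat_of_le_succ (Wc_succ m)

theorem Wc_gh (d : ℕ) (e : Q.A) {x : M} (hx : x ∈ Wc k Q m d) :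
    Leavitt.gh k Q e • x ∈ Wc k Q m (d + 1) :=
  (le_sup_right : _ ≤ Wc k Q m (d + 1)) (Submodule.mem_iSup_of_mem e ⟨x, hx, rfl⟩)

theorem Wc_p (d : ℕ) (u : Q.V) {x : M} (hx : x ∈ Wc k Q m d) :
    Leavitt.p k Q u • x ∈ Wc k Q m d := by
  suffices h : Wc k Q m d ≤ (Wc k Q m d).comap (Lop M (Leavitt.p k Q u)) from h hx
  clear hx
  induction d with
  | zero =>
    change Submodule.span k _ ≤ _
    rw [Submodule.span_le]
    rintro _ ⟨⟨w, j⟩, rfl⟩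
    change Leavitt.p k Q u • Leavitt.p k Q w • m j ∈ Wc k Q m 0
    rw [← mul_smul]
    by_cases h : u = w
    · rw [h, Leavitt.p_mul_self]
      exact Submodule.subset_span ⟨(w, j), rfl⟩
    · rw [Leavitt.p_mul_ne k Q u w h, zero_smul]
      exact Submodule.zero_mem _
  | succ d ih =>
    change Wc k Q m d ⊔ ⨆ e : Q.A, (Wc k Q m d).map (Lop M (Leavitt.gh k Q e)) ≤ _
    refine sup_le ?_ (iSup_le fun e => ?_)
    · intro x hx
      exact Wc_succ m d (ih hx)
    · rintro _ ⟨x, hx, rfl⟩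
      change Leavitt.p k Q u • Leavitt.gh k Q e • x ∈ Wc k Q m (d + 1)
      rw [← mul_smul]
      by_cases h : u = Q.tgt e
      · rw [h, Leavitt.tgt_mul_gh]
        exact Wc_gh m d e hx
      · rw [← Leavitt.tgt_mul_gh, ← mul_assoc, Leavitt.p_mul_ne k Q u _ h, zero_mul, zero_smul]
        exact Submodule.zero_mem _

theorem Wc_gen (j : Fin n) : m j ∈ Wc k Q m 0 := by
  rw [← one_smul (Leavitt k Q) (m j), ← Leavitt.sum_p, Finset.sum_smul]
  exact Submodule.sum_mem _ fun u _ => Submodule.subset_span ⟨(u, j), rfl⟩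

theorem Wc_act (r : RR k Q) (d0 : ℕ) : ∃ d1, d0 ≤ d1 ∧ ∀ x ∈ Wc k Q m d0,
    phi k Q r • x ∈ Wc k Q m d1 ∧
    ∀ (V : Submodule k M), Wc k Q m d1 ≤ V → ∀ (B : Type) [AddCommGroup B] [Module (RR k Q) B]
      (i : M →+ B), Cpt (Q := Q) V i → r • i x = i (phi k Q r • x) := by
  induction r using RR_ind generalizing d0 with
  | h0 a =>
    refine ⟨d0, le_rfl, fun x hx => ⟨?_, fun V hV B _ _ i hi => ?_⟩⟩
    · rw [phi_algebraMap, algebraMap_smul]; exact Submodule.smul_mem _ _ hx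
    · rw [phi_algebraMap, hi.alg, algebraMap_smul]
  | hp u =>
    refine ⟨d0, le_rfl, fun x hx => ⟨?_, fun V hV B _ _ i hi => ?_⟩⟩
    · rw [phi_pp]; exact Wc_p m d0 u hx
    · rw [phi_pp, hi.vert u x (hV hx)]
  | hg e =>
    refine ⟨d0 + 1, Nat.le_succ _, fun x hx => ⟨?_, fun V hV B _ _ i hi => ?_⟩⟩
    · rw [phi_ga]; exact Wc_gh m d0 e hx
    · rw [phi_ga, hi.gho e x (hV (Wc_succ m d0 hx)) (hV (Wc_gh m d0 e hx))]
  | hmul x y hx hy =>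
    obtain ⟨d1, hd1, h1⟩ := hy d0
    obtain ⟨d2, hd2, h2⟩ := hx d1
    refine ⟨d2, hd1.trans hd2, fun z hz => ⟨?_, fun V hV B _ _ i hi => ?_⟩⟩
    · rw [map_mul, mul_smul]; exact (h2 _ (h1 z hz).1).1
    · rw [map_mul, mul_smul, mul_smul, (h1 z hz).2 V ((Wc_mono m hd2).trans hV) B i hi,
        (h2 _ (h1 z hz).1).2 V hV B i hi]
  | hadd x y hx hy =>
    obtain ⟨d1, hd1, h1⟩ := hx d0
    obtain ⟨d2, hd2, h2⟩ := hy d0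
    refine ⟨max d1 d2, hd1.trans (le_max_left _ _), fun z hz =>
      ⟨?_, fun V hV B _ _ i hi => ?_⟩⟩
    · rw [map_add, add_smul]
      exact Submodule.add_mem _ (Wc_mono m (le_max_left _ _) (h1 z hz).1)
        (Wc_mono m (le_max_right _ _) (h2 z hz).1)
    · rw [map_add, add_smul, add_smul, map_add,
        (h1 z hz).2 V ((Wc_mono m (le_max_left _ _)).trans hV) B i hi,
        (h2 z hz).2 V ((Wc_mono m (le_max_right _ _)).trans hV) B i hi]

theorem Wc_span (d : ℕ) {B : Type} [AddCommGroup B] [Module (RR k Q) B] (i : M →+ B)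
    (hi : Cpt (Q := Q) (Wc k Q m d) i)
    (hB : Submodule.span (RR k Q) (Set.image i (Wc k Q m d : Set M)) = ⊤) :
    Submodule.span (RR k Q) (Set.range fun j => i (m j)) = ⊤ := by
  rw [eq_top_iff, ← hB, Submodule.span_le]
  set S := Submodule.span (RR k Q) (Set.range fun j => i (m j)) with hS
  let T : Submodule k M :=
    { carrier := {x | i x ∈ S}
      add_mem' := fun {a b} ha hb => by
        change i (a + b) ∈ S
        rw [map_add]; exact S.add_mem ha hb
      zero_mem' := by change i 0 ∈ S; rw [map_zero]; exact S.zero_mem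
      smul_mem' := fun c x hx => by
        change i (c • x) ∈ S
        rw [← hi.alg]; exact S.smul_mem _ hx }
  have hT : ∀ d' ≤ d, Wc k Q m d' ≤ T := by
    intro d' hd'
    induction d' with
    | zero =>
      change Submodule.span k _ ≤ _
      rw [Submodule.span_le]
      rintro _ ⟨⟨w, j⟩, rfl⟩
      change i (Leavitt.p k Q w • m j) ∈ S
      rw [← hi.vert w _ (Wc_mono m (Nat.zero_le d) (Wc_gen m j))]
      exact S.smul_mem _ (Submodule.subset_span ⟨j, rfl⟩)
    | succ d' ih =>
      change Wc k Q m d' ⊔ ⨆ e : Q.A, (Wc k Q m d').map (Lop M (Leavitt.gh k Q e)) ≤ _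
      refine sup_le (ih (by omega)) (iSup_le fun e => ?_)
      rintro _ ⟨x, hx, rfl⟩
      change i (Leavitt.gh k Q e • x) ∈ S
      rw [← hi.gho e x (Wc_mono m (by omega) hx) (Wc_mono m hd' (Wc_gh m d' e hx))]
      exact S.smul_mem _ (ih (by omega) hx)
  rintro _ ⟨x, hx, rfl⟩
  exact hT d le_rfl hx

variable (k Q) in
theorem main_D (M : Type) [AddCommGroup M] [Module (Leavitt k Q) M]
    (hM : Module.FinitePresentation (Leavitt k Q) M) :
    ∃ (J : Type) (_ : Fintype J) (t : J → Q.V) (B : Type) (_ : AddCommGroup B)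
      (_ : Module (RR k Q) B) (_ : Module k B) (_ : IsScalarTower k (RR k Q) B)
      (inr : ((j : J) → pIdeal k Q (t j)) →ₗ[RR k Q] B),
      Function.Injective inr ∧ FiniteDimensional k (B ⧸ LinearMap.range inr) ∧
      Nonempty (M ≃ₗ[Leavitt k Q] TT k Q B) := by
  classical
  letI : Module k M := Module.compHom M (algebraMap k (Leavitt k Q))
  haveI : IsScalarTower k (Leavitt k Q) M := ⟨fun a r x => by
    rw [Algebra.smul_def, mul_smul]; rfl⟩
  obtain ⟨n, K, eM, hK⟩ := Module.FinitePresentation.exists_fin (Leavitt k Q) M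
  let f : (Fin n → Leavitt k Q) →ₗ[Leavitt k Q] M := eM.symm.toLinearMap.comp K.mkQ
  have hfs : Function.Surjective f := eM.symm.surjective.comp K.mkQ_surjective
  have hfk : LinearMap.ker f = K := by
    rw [LinearEquiv.ker_comp, Submodule.ker_mkQ]
  let m : Fin n → M := fun j => f (Pi.single j 1)
  have hf : ∀ z, f z = ∑ j, z j • m j := fun z => by
    conv_lhs => rw [pi_eq_sum_univ' z]
    rw [map_sum]
    exact Finset.sum_congr rfl fun j _ => by rw [map_smul]
  -- the kernel is generated by elements of the path algebra
  let N' : AddSubgroup (Fin n → Leavitt k Q) :=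
    { carrier := {z | ∀ j, z j ∈ (phi k Q).range}
      add_mem' := fun ha hb j => add_mem (ha j) (hb j)
      zero_mem' := fun j => zero_mem _
      neg_mem' := fun ha j => neg_mem (ha j) }
  have hN : K = Submodule.span (Leavitt k Q) ((K : Set _) ∩ N') := by
    refine span_inter_eq (k := k) (Q := Q) N' ?_ ?_ ?_ ?_ K
    · exact fun v x hx j => mul_mem ⟨_, phi_pp k Q v⟩ (hx j)
    · exact fun v x hx j => mul_mem ⟨_, phi_ga k Q v⟩ (hx j)
    · exact fun v x hx j => mul_mem ⟨_, phi_algebraMap k Q v⟩ (hx j)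
    · rw [eq_top_iff]
      rintro z -
      rw [pi_eq_sum_univ' z]
      refine Submodule.sum_mem _ fun j _ => Submodule.smul_mem _ _ (Submodule.subset_span ?_)
      intro j'
      by_cases h : j' = j
      · subst h; exact ⟨1, by simp⟩
      · exact ⟨0, by simp [Pi.single_apply, h]⟩
  rw [hN] at hK
  obtain ⟨S, hSK, hS⟩ := (Submodule.fg_span_iff_fg_span_finset_subset _).mp hK
  rw [← hN] at hS
  have hy : ∀ s : S, ∃ y : Fin n → RR k Q, ∀ j, phi k Q (y j) = s.1 j := fun s =>
    Classical.skolem.mp fun j => (hSK s.2).2 j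
  choose y hy using hy
  choose d1 hd1 h1 using fun (x : S × Fin n) => Wc_act (k := k) (Q := Q) m (y x.1 x.2) 0
  let d : ℕ := Finset.univ.sup d1
  have hd : ∀ x, d1 x ≤ d := fun x => Finset.le_sup (Finset.mem_univ x)
  haveI := Wc_fd (k := k) (Q := Q) m d
  obtain ⟨J, hJ, t, B, iB1, iB2, iB3, iB4, inr, π, i, hinj, hfd, hi, hπ, hsp⟩ :=
    exists_B (Q := Q) (Wc k Q m d) (fun v x hx => Wc_p m d v hx)
  refine ⟨J, hJ, t, B, iB1, iB2, iB3, iB4, inr, hinj, hfd, ?_⟩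
  let g0 : (Fin n → Leavitt k Q) →ₗ[Leavitt k Q] TT k Q B :=
    Fintype.linearCombination (Leavitt k Q) (fun j => tmk B (i (m j)))
  have hg0 : ∀ z, g0 z = ∑ j, z j • tmk B (i (m j)) := fun z => rfl
  have hker : K ≤ LinearMap.ker g0 := by
    rw [hS, Submodule.span_le]
    intro s hs
    change g0 s = 0
    have h2 : ∀ j, s j • tmk (k := k) (Q := Q) B (i (m j)) = tmk B (i (s j • m j)) := by
      intro j
      have hys : phi k Q (y ⟨s, hs⟩ j) = s j := hy _ j
      rw [← hys, ← map_smulₛₗ (tmk B),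
        (h1 (⟨s, hs⟩, j) _ (Wc_gen m j)).2 _ (Wc_mono m (hd _)) B i hi]
    rw [hg0]
    simp only [h2]
    rw [← map_sum, ← map_sum, ← hf]
    have : f s = 0 := by
      rw [← LinearMap.mem_ker, hfk]; exact (hSK hs).1
    rw [this, map_zero, map_zero]
  let g : M →ₗ[Leavitt k Q] TT k Q B := (K.liftQ g0 hker).comp eM.toLinearMap
  have hg : ∀ z, g (f z) = g0 z := fun z => by
    change K.liftQ g0 hker (eM (eM.symm (K.mkQ z))) = _
    rw [LinearEquiv.apply_symm_apply]; rfl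
  have hgm : ∀ j, g (m j) = tmk B (i (m j)) := fun j => by
    rw [hg, hg0, Finset.sum_eq_single j]
    · rw [Pi.single_eq_same, one_smul]
    · intro j' _ h; rw [Pi.single_eq_of_ne h, zero_smul]
    · intro h; exact absurd (Finset.mem_univ _) h
  have hmd : ∀ j, m j ∈ Wc k Q m d := fun j => Wc_mono m (Nat.zero_le d) (Wc_gen m j)
  refine ⟨LinearEquiv.ofLinearMap g (tlift π) ?_ ?_⟩
  · refine tt_ext fun b => ?_
    rw [LinearMap.comp_apply, tlift_tmk, LinearMap.id_apply]
    have hb : b ∈ Submodule.span (RR k Q) (Set.range fun j => i (m j)) := by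
      rw [Wc_span m d i hi hsp]; trivial
    induction hb using Submodule.span_induction with
    | mem x hx =>
      obtain ⟨j, rfl⟩ := hx
      change g (π (i (m j))) = _
      rw [hπ _ (hmd j), hgm]
    | zero => simp
    | add x y _ _ hx hy => rw [map_add, map_add, map_add, hx, hy]
    | smul r x _ hx => rw [map_smulₛₗ π, map_smul g, hx, map_smulₛₗ (tmk B)]
  · refine LinearMap.ext fun x => ?_
    obtain ⟨z, rfl⟩ := hfs x
    rw [LinearMap.comp_apply, LinearMap.id_apply, hg, hg0, map_sum, hf]
    refine Finset.sum_congr rfl fun j _ => ?_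
    rw [map_smul, tlift_tmk, hπ _ (hmd j)]

end Chain
end LPA

namespace LPA

section Proj

variable {k : Type} [Field k] {Q : FinQuiver}

theorem tt_finite {N : Type} [AddCommGroup N] [Module (RR k Q) N] [h : Module.Finite (RR k Q) N] :
    Module.Finite (Leavitt k Q) (TT k Q N) := by
  classical
  obtain ⟨S, hS⟩ := h.fg_top
  refine ⟨⟨S.image (tmk N), ?_⟩⟩
  rw [eq_top_iff, ← tmk_span, Submodule.span_le]
  rintro _ ⟨n, rfl⟩
  have hn : n ∈ Submodule.span (RR k Q) (S : Set N) := by rw [hS]; trivial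
  induction hn using Submodule.span_induction with
  | mem x hx =>
    exact Submodule.subset_span (Finset.mem_coe.mpr (Finset.mem_image_of_mem _ hx))
  | zero => rw [map_zero]; exact Submodule.zero_mem _
  | add x y _ _ hx hy => rw [map_add]; exact Submodule.add_mem _ hx hy
  | smul r x _ hx => rw [map_smulₛₗ (tmk N)]; exact Submodule.smul_mem _ _ hx

theorem tt_projective {N : Type} [AddCommGroup N] [Module (RR k Q) N]
    [h : Module.Projective (RR k Q) N] : Module.Projective (Leavitt k Q) (TT k Q N) := by
  refine Module.Projective.of_lifting_property'' fun f hf => ?_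
  let X := TT k Q N →₀ Leavitt k Q
  let i1 : Module (RR k Q) X := Module.compHom X (phi k Q)
  let i2 : Module (RR k Q) (TT k Q N) := Module.compHom (TT k Q N) (phi k Q)
  let f' : X →ₗ[RR k Q] TT k Q N :=
    { toFun := f, map_add' := map_add f, map_smul' := fun r x => map_smul f (phi k Q r) x }
  let g' : N →ₗ[RR k Q] TT k Q N :=
    { toFun := tmk N, map_add' := map_add (tmk N), map_smul' := fun r x => map_smulₛₗ (tmk N) r x }
  obtain ⟨l, hl⟩ := Module.projective_lifting_property f' g' hf
  let l' : N →ₛₗ[phi k Q] X :=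
    { toFun := l, map_add' := map_add l, map_smul' := fun r x => map_smul l r x }
  refine ⟨tlift l', tt_ext fun n => ?_⟩
  rw [LinearMap.comp_apply, tlift_tmk]
  exact LinearMap.congr_fun hl n

/-- Retraction onto the projective part. -/
noncomputable def prR {J : Type} (t : J → Q.V) :
    (J → RR k Q) →ₗ[RR k Q] ((j : J) → pIdeal k Q (t j)) :=
  LinearMap.pi fun j => (LinearMap.rangeRestrict (rightMul (RR k Q) (pp k Q (t j)))).comp
    (LinearMap.proj j)

/-- Inclusion of the projective part. -/
noncomputable def prI {J : Type} (t : J → Q.V) :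
    ((j : J) → pIdeal k Q (t j)) →ₗ[RR k Q] (J → RR k Q) :=
  LinearMap.pi fun j => (pIdeal k Q (t j)).subtype.comp (LinearMap.proj j)

theorem prR_prI {J : Type} (t : J → Q.V) : (prR (k := k) t).comp (prI t) = LinearMap.id := by
  refine LinearMap.ext fun x => funext fun j => Subtype.ext ?_
  exact (congrArg Subtype.val (pIdeal_eq (t j) (x j))).symm

theorem P0_projective {J : Type} [Fintype J] (t : J → Q.V) :
    Module.Projective (RR k Q) ((j : J) → pIdeal k Q (t j)) :=
  Module.Projective.of_split (prI t) (prR t) (prR_prI t)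

theorem P0_finite {J : Type} [Fintype J] (t : J → Q.V) :
    Module.Finite (RR k Q) ((j : J) → pIdeal k Q (t j)) :=
  Module.Finite.of_surjective (prR t) fun x => ⟨prI t x, LinearMap.congr_fun (prR_prI t) x⟩

theorem part_two (M : Type) [AddCommGroup M] [Module (Leavitt k Q) M]
    (hM : Module.FinitePresentation (Leavitt k Q) M) :
    ∃ P : Submodule (Leavitt k Q) M, Module.Finite (Leavitt k Q) ↥P ∧
      Module.Projective (Leavitt k Q) ↥P ∧ IsFiniteLength (Leavitt k Q) (M ⧸ P) := by
  obtain ⟨J, _, t, B, _, _, _, _, inr, hinj, hfd, ⟨eM⟩⟩ := main_D k Q M hM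
  let j : TT k Q ((j : J) → pIdeal k Q (t j)) →ₗ[Leavitt k Q] M :=
    eM.symm.toLinearMap.comp (tm inr)
  have hj : Function.Injective j := eM.symm.injective.comp (tm_injective inr hinj)
  let eP := LinearEquiv.ofInjective j hj
  have := P0_projective (k := k) t
  have := P0_finite (k := k) t
  have h1 := tt_finite (k := k) (Q := Q) (N := (j : J) → pIdeal k Q (t j))
  have h2 := tt_projective (k := k) (Q := Q) (N := (j : J) → pIdeal k Q (t j))
  refine ⟨LinearMap.range j, Module.Finite.equiv eP, Module.Projective.of_equiv' eP, ?_⟩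
  let A := LinearMap.range inr
  let g : M →ₗ[Leavitt k Q] TT k Q (B ⧸ A) := (tm A.mkQ).comp eM.toLinearMap
  have hg : Function.Surjective g := (tm_surjective _ A.mkQ_surjective).comp eM.surjective
  have hk : LinearMap.ker g = LinearMap.range j := by
    ext x
    rw [LinearMap.mem_ker]
    change tm A.mkQ (eM x) = 0 ↔ _
    rw [tm_exact A (eM x)]
    have hc : ∀ y, tm A.subtype (tm inr.rangeRestrict y) = tm inr y := fun y => by
      have : (tm A.subtype).comp (tm inr.rangeRestrict) = tm inr := tt_ext fun n => by
        rw [LinearMap.comp_apply, tm_tmk, tm_tmk, tm_tmk]; rfl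
      exact LinearMap.congr_fun this y
    constructor
    · rintro ⟨z, hz⟩
      obtain ⟨y, rfl⟩ := tm_surjective _ inr.surjective_rangeRestrict z
      refine ⟨y, ?_⟩
      change eM.symm (tm inr y) = x
      rw [← hc, hz, LinearEquiv.symm_apply_apply]
    · rintro ⟨y, rfl⟩
      refine ⟨tm inr.rangeRestrict y, ?_⟩
      change _ = eM (eM.symm (tm inr y))
      rw [hc, LinearEquiv.apply_symm_apply]
  have h3 : IsFiniteLength (Leavitt k Q) (TT k Q (B ⧸ A)) := tt_finiteLength fd_finiteLength
  exact (((Submodule.quotEquivOfEq _ _ hk).symm.trans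
    (g.quotKerEquivOfSurjective hg)).symm).isFiniteLength h3

end Proj

section NonArt

variable {k : Type} [Field k] {Q : FinQuiver}

theorem exists_Y (k : Type) [Field k] (l n : ℕ) (hl : 1 ≤ l) :
    ∃ (Y : Type) (_ : CommRing Y) (_ : Algebra k Y) (x : Y), IsUnit x ∧
      (1 - x ^ l) ^ n ≠ 0 ∧ (1 - x ^ l) ^ (n + 1) = 0 := by
  let f : Polynomial k := 1 - Polynomial.X ^ l
  let I : Ideal (Polynomial k) := Ideal.span {f ^ (n + 1)}
  have hx : ∀ m, (1 - (Ideal.Quotient.mk I Polynomial.X) ^ l) ^ m = Ideal.Quotient.mk I (f ^ m) :=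
    fun m => by simp [f]
  refine ⟨Polynomial k ⧸ I, inferInstance, inferInstance, Ideal.Quotient.mk I Polynomial.X,
    ?_, ?_, ?_⟩
  · have hc : IsCoprime (Polynomial.X : Polynomial k) (f ^ (n + 1)) := by
      refine IsCoprime.pow_right ⟨Polynomial.X ^ (l - 1), 1, ?_⟩
      rw [← pow_succ, Nat.sub_add_cancel hl]
      simp [f]
    obtain ⟨a, b, hab⟩ := hc
    refine IsUnit.of_mul_eq_one (Ideal.Quotient.mk I a) ?_
    rw [← map_mul, ← map_one (Ideal.Quotient.mk I), Ideal.Quotient.eq, Ideal.mem_span_singleton]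
    exact ⟨-b, by linear_combination hab⟩
  · rw [hx, Ne, Ideal.Quotient.eq_zero_iff_mem, Ideal.mem_span_singleton]
    have hf0 : f ≠ 0 := by
      intro h
      have := congrArg (Polynomial.eval 0) h
      simp [f, show l ≠ 0 by omega] at this
    rintro ⟨c, hc⟩
    have : f ^ n * 1 = f ^ n * (f * c) := by rw [mul_one, ← mul_assoc, ← pow_succ]; exact hc
    have h1 := mul_left_cancel₀ (pow_ne_zero n hf0) this
    have := congrArg (Polynomial.eval 1) h1
    simp [f] at this
  · rw [hx, Ideal.Quotient.eq_zero_iff_mem]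
    exact Ideal.subset_span rfl

variable {I : Type} [Fintype I] [DecidableEq I] (vt : I → Q.V) (a : I → Q.A) (σ : I → I)

/-- The test representation. -/
noncomputable def tRp (hv : Function.Injective vt) (h1 : ∀ i, Q.src (a i) = vt i)
    (h2 : ∀ i, Q.tgt (a i) = vt (σ i)) (Y : Type) [CommRing Y] [Algebra k Y] (x : Y) :
    Rp k Q (I → Y) where
  P v := LinearMap.pi fun i => if vt i = v then LinearMap.proj i else 0
  G e := ∑ i, if a i = e then
    (LinearMap.single k (fun _ : I => Y) (σ i)).comp ((LinearMap.mulLeft k x).comp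
      (LinearMap.proj i)) else 0
  P_self v y := by
    funext i
    simp only [LinearMap.pi_apply]
    split_ifs with h <;> simp [h]
  P_ne v w hvw y := by
    funext i
    simp only [LinearMap.pi_apply]
    split_ifs with h
    · simp only [LinearMap.proj_apply, LinearMap.pi_apply]
      rw [if_neg (by rw [h]; exact hvw)]; rfl
    · rfl
  P_sum y := by
    funext i
    rw [Finset.sum_apply, Finset.sum_eq_single (vt i)]
    · simp
    · intro b _ hb
      simp [Ne.symm hb]
    · intro h; exact absurd (Finset.mem_univ _) h
  P_G e y := by
    rw [LinearMap.sum_apply, map_sum]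
    refine Finset.sum_congr rfl fun i _ => ?_
    split_ifs with h
    · funext j
      rw [← h, h2]
      simp only [LinearMap.pi_apply, LinearMap.comp_apply, LinearMap.single_apply]
      by_cases hj : j = σ i
      · subst hj; simp
      · rw [Pi.single_eq_of_ne hj]
        split_ifs
        · simp [hj]
        · rfl
    · simp
  G_P e y := by
    rw [LinearMap.sum_apply, LinearMap.sum_apply]
    refine Finset.sum_congr rfl fun i _ => ?_
    split_ifs with h
    · rw [← h, h1]
      simp
    · rfl

variable (k) in
/-- Paths along `σ`. -/
noncomputable def pa (i : I) : ℕ → RR k Q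
  | 0 => 1
  | m + 1 => ga k Q (a (σ^[m] i)) * pa i m

theorem not_artinian (hv : Function.Injective vt) (h1 : ∀ i, Q.src (a i) = vt i)
    (h2 : ∀ i, Q.tgt (a i) = vt (σ i)) (i : I) :
    ¬ IsArtinian (Leavitt k Q) (TT k Q (pIdeal k Q (vt i))) := by
  intro hA
  obtain ⟨m1, m2, hm, hmm⟩ := Finite.exists_ne_map_eq_of_infinite (fun m => σ^[m] i)
  obtain ⟨j, l, hl, hjl⟩ : ∃ j l, 1 ≤ l ∧ σ^[l] (σ^[j] i) = σ^[j] i := by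
    rcases lt_or_gt_of_ne hm with h | h
    · refine ⟨m1, m2 - m1, by omega, ?_⟩
      rw [← Function.iterate_add_apply, Nat.sub_add_cancel h.le]; exact hmm.symm
    · refine ⟨m2, m1 - m2, by omega, ?_⟩
      rw [← Function.iterate_add_apply, Nat.sub_add_cancel h.le]; exact hmm
  set w := σ^[j] i with hw
  let r : RR k Q := pa k a σ i j
  let c : RR k Q := pa k a σ w l
  let g := tmk (k := k) (Q := Q) (pIdeal k Q (vt i)) (pgen k (vt i))
  let F : ℕ →o (Submodule (Leavitt k Q) (TT k Q (pIdeal k Q (vt i))))ᵒᵈ :=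
    { toFun := fun n => OrderDual.toDual
        (Submodule.span (Leavitt k Q) {phi k Q ((1 - c) ^ n * r) • g})
      monotone' := monotone_nat_of_le_succ fun n => by
        rw [OrderDual.toDual_le_toDual, Submodule.span_singleton_le_iff_mem]
        have he : phi k Q ((1 - c) ^ (n + 1) * r) • g =
            phi k Q (1 - c) • phi k Q ((1 - c) ^ n * r) • g := by
          rw [← mul_smul, ← map_mul, ← mul_assoc, ← pow_succ']
        rw [he]
        exact Submodule.smul_mem _ _ (Submodule.mem_span_singleton_self _) }
  obtain ⟨n, hn⟩ := IsArtinian.monotone_stabilizes F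
  have hn' : Submodule.span (Leavitt k Q) {phi k Q ((1 - c) ^ n * r) • g} =
      Submodule.span (Leavitt k Q) {phi k Q ((1 - c) ^ (n + 1) * r) • g} := hn (n + 1) (by omega)
  have hmem := Submodule.mem_span_singleton_self (R := Leavitt k Q) (phi k Q ((1 - c) ^ n * r) • g)
  rw [hn', Submodule.mem_span_singleton] at hmem
  obtain ⟨lam, hlam⟩ := hmem
  obtain ⟨Y, _, _, x, hx, hne, hz⟩ := exists_Y k l n hl
  let ρ := tRp (k := k) vt a σ hv h1 h2 Y x
  have hG : ∀ i f, ρ.G (a i) f = Pi.single (σ i) (x * f i) := by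
    intro i f
    change (∑ i', _ : Module.End k (I → Y)) f = _
    rw [LinearMap.sum_apply, Finset.sum_eq_single i]
    · rw [if_pos rfl]; rfl
    · intro b _ hb
      rw [if_neg, LinearMap.zero_apply]
      intro h
      exact hb (hv (by rw [← h1, ← h1, h]))
    · intro h; exact absurd (Finset.mem_univ _) h
  have hP : ∀ i y, ρ.P (vt i) (Pi.single i y) = Pi.single i y := by
    intro i y
    funext j
    change (if vt j = vt i then LinearMap.proj j else 0 : (I → Y) →ₗ[k] Y) _ = _
    by_cases h : j = i
    · subst h; simp
    · rw [if_neg (fun h' => h (hv h')), Pi.single_eq_of_ne h]; rfl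
  have hpa : ∀ i m y, pa k a σ i m • ρ.mkM (Pi.single i y) =
      ρ.mkM (Pi.single (σ^[m] i) (x ^ m * y)) := by
    intro i m y
    induction m with
    | zero => rw [pow_zero, one_mul]; exact one_smul _ _
    | succ m ih =>
      change (ga k Q (a (σ^[m] i)) * pa k a σ i m) • _ = _
      rw [mul_smul, ih, ρ.ga_mkM, hG, Pi.single_eq_same, ← mul_assoc, ← pow_succ',
        Function.iterate_succ_apply']
  have hc : ∀ m y, (1 - c) ^ m • ρ.mkM (Pi.single w y) =
      ρ.mkM (Pi.single w ((1 - x ^ l) ^ m * y)) := by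
    intro m y
    induction m with
    | zero => rw [pow_zero, pow_zero, one_mul, one_smul]
    | succ m ih =>
      rw [pow_succ', mul_smul, ih, sub_smul, one_smul, hpa, hjl, ← map_sub, ← Pi.single_sub]
      congr 2
      ring
  have htf : ∀ m (f : ρ.Md), Tor (k := k) (Q := Q) m f → f = 0 := by
    intro m
    induction m with
    | zero => exact fun f hf => hf
    | succ m ih =>
      rintro f ⟨-, hf⟩
      obtain ⟨f, rfl⟩ := ρ.mkM.surjective f
      have : f = 0 := by
        funext j
        have := ih _ (hf (a j))
        rw [ρ.ga_mkM, hG, LinearEquiv.map_eq_zero_iff] at this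
        have := congrFun this (σ j)
        rw [Pi.single_eq_same, Pi.zero_apply] at this
        exact hx.mul_right_eq_zero.mp this
      rw [this, map_zero]
  let Φ : pIdeal k Q (vt i) →ₗ[RR k Q] ρ.Md :=
    (LinearMap.toSpanSingleton (RR k Q) ρ.Md (ρ.mkM (Pi.single i 1))).comp
      (pIdeal k Q (vt i)).subtype
  have hΦ : Φ (pgen k (vt i)) = ρ.mkM (Pi.single i 1) := by
    change pp k Q (vt i) • ρ.mkM (Pi.single i 1) = _
    rw [ρ.pp_mkM, hP]
  have key : ∀ m, tm Φ (phi k Q ((1 - c) ^ m * r) • g) =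
      tmk ρ.Md (ρ.mkM (Pi.single w ((1 - x ^ l) ^ m * x ^ j))) := by
    intro m
    rw [map_smul, tm_tmk, hΦ, ← map_smulₛₗ (tmk ρ.Md), mul_smul, hpa, mul_one, hc]
  have h := congrArg (tm Φ) hlam
  rw [map_smul, key, key, hz, zero_mul, Pi.single_zero, map_zero, map_zero, smul_zero] at h
  obtain ⟨m, hm⟩ := exists_tor h.symm
  have h0 := htf m _ hm
  rw [LinearEquiv.map_eq_zero_iff, Pi.single_eq_zero_iff] at h0
  exact hne (((hx.pow j).mul_left_eq_zero).mp h0)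

theorem pIdeal_fd_step (u : Q.V)
    (h : ∀ e, Q.src e = u → FiniteDimensional k (pIdeal k Q (Q.tgt e))) :
    FiniteDimensional k (pIdeal k Q u) := by
  have : ∀ e : {e : Q.A // Q.src e = u}, FiniteDimensional k (pIdeal k Q (Q.tgt e.1)) :=
    fun e => h e.1 e.2
  let ν : ((e : {e : Q.A // Q.src e = u}) → pIdeal k Q (Q.tgt e.1)) →ₗ[k] pIdeal k Q u :=
    (nu k Q u).restrictScalars k
  let S : Submodule k (pIdeal k Q u) := Submodule.span k {pgen k u} ⊔ LinearMap.range ν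
  have hS : S = ⊤ := by
    rw [eq_top_iff]
    rintro x -
    obtain ⟨b, hb⟩ := cok_eq u (Submodule.Quotient.mk x)
    have hx : x - algebraMap k (RR k Q) b • pgen k u ∈ LinearMap.range (nu k Q u) :=
      (Submodule.Quotient.eq _).mp hb
    rw [algebraMap_smul] at hx
    rw [← sub_add_cancel x (b • pgen k u), add_comm]
    exact Submodule.add_mem_sup (Submodule.smul_mem _ _ (Submodule.mem_span_singleton_self _)) hx
  have hfd : FiniteDimensional k S := by
    have : FiniteDimensional k (Submodule.span k {pgen k u}) := inferInstance
    have : FiniteDimensional k (LinearMap.range ν) := inferInstance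
    infer_instance
  rw [hS] at hfd
  exact Module.Finite.equiv (Submodule.topEquiv (R := k) (M := pIdeal k Q u))

theorem pIdeal_fd (u : Q.V) (h : IsArtinian (Leavitt k Q) (TT k Q (pIdeal k Q u))) :
    FiniteDimensional k (pIdeal k Q u) := by
  classical
  by_contra hu
  let I := {v : Q.V // ¬ FiniteDimensional k (pIdeal k Q v)}
  have hI : ∀ i : I, ∃ e, Q.src e = i.1 ∧ ¬ FiniteDimensional k (pIdeal k Q (Q.tgt e)) := by
    intro i
    by_contra! hh
    exact i.2 (pIdeal_fd_step i.1 hh)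
  choose a ha ha' using hI
  exact not_artinian (k := k) (fun i : I => i.1) a (fun i => ⟨Q.tgt (a i), ha' i⟩)
    Subtype.val_injective ha (fun i => rfl) ⟨u, hu⟩ h

theorem part_three (M : Type) [AddCommGroup M] [Module (Leavitt k Q) M]
    (hM : Module.FinitePresentation (Leavitt k Q) M) (hl : IsFiniteLength (Leavitt k Q) M) :
    ∃ X : ModuleOver (RR k Q), FinDimOver k (RR k Q) X ∧
      Nonempty (M ≃ₗ[Leavitt k Q] TT k Q X.carrier) := by
  classical
  obtain ⟨J, _, t, B, i1, i2, i3, i4, inr, hinj, hfd, ⟨eM⟩⟩ := main_D k Q M hM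
  refine ⟨⟨B⟩, ?_, ⟨eM⟩⟩
  have hA : IsArtinian (Leavitt k Q) (TT k Q B) :=
    (isFiniteLength_iff_isNoetherian_isArtinian.mp (eM.isFiniteLength hl)).2
  have h1 : ∀ j, FiniteDimensional k (pIdeal k Q (t j)) := fun j => by
    refine pIdeal_fd _ ?_
    let s : pIdeal k Q (t j) →ₗ[RR k Q] B :=
      inr.comp (LinearMap.single (RR k Q) (fun j => pIdeal k Q (t j)) j)
    have hs : Function.Injective s := hinj.comp
      (Pi.single_injective (M := fun j => pIdeal k Q (t j)) j)
    exact isArtinian_of_injective (tm s) (tm_injective s hs)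
  have h2 : FiniteDimensional k (LinearMap.range inr) :=
    inferInstanceAs (FiniteDimensional k (LinearMap.range (inr.restrictScalars k)))
  have h3 : FiniteDimensional k B := by
    have h4 : FiniteDimensional k (B ⧸ (LinearMap.range inr).restrictScalars k) := hfd
    have h5 : FiniteDimensional k ((LinearMap.range inr).restrictScalars k) := h2
    exact Module.Finite.of_submodule_quotient ((LinearMap.range inr).restrictScalars k)
  have h6 : (Module.compHom B (algebraMap k (RR k Q)) : Module k B) = i3 := by
    refine Module.ext' _ _ fun a b => ?_
    exact algebraMap_smul (RR k Q) a b
  change @FiniteDimensional k B _ _ (Module.compHom B (algebraMap k (RR k Q)))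
  rw [h6]
  exact h3

end NonArt
end LPA

open LPA in
/-- Let `R = P_k(Ē)` and `L = L_k(E)`.
(1) If `N` is a finite-dimensional left `R`-module with a composition series of length `ℓ`,
exactly `r` of whose factors are isomorphic to modules in `{coker ν_i | i not a sink}`, then
`L ⊗_R N` has finite length exactly `ℓ - r` (witnessed by a composition series).
(2) Every finitely presented left `L`-module `M` contains a finitely generated projective
`L`-submodule `P` with `M/P` of finite length.
(3) Every finitely presented left `L`-module of finite length is isomorphic to `L ⊗_R N` for
some finite-dimensional left `R`-module `N`. -/
theorem statement_16 (k : Type) [Field k] (Q : FinQuiver) :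
    (∀ (N : Type) [AddCommGroup N] [Module (PathAlg k Q.rev) N] [Module k N]
        [IsScalarTower k (PathAlg k Q.rev) N] [FiniteDimensional k N]
        (ℓ r : ℕ) (c : Fin (ℓ + 1) → Submodule (PathAlg k Q.rev) N),
        IsCompSeries ℓ c →
        (∃ T : Finset (Fin ℓ), T.card = r ∧ ∀ i : Fin ℓ,
          (i ∈ T ↔ ∃ v : Q.V, ¬ IsSink Q v ∧
            Nonempty (SeriesFactor c i ≃ₗ[PathAlg k Q.rev] CokerNu k Q v))) →
        ∃ c' : Fin (ℓ - r + 1) → Submodule (Leavitt k Q)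
          (TensorPhi (PathAlg k Q.rev) (Leavitt k Q) (revToLeavitt k Q).toRingHom N),
          IsCompSeries (ℓ - r) c') ∧
    (∀ (M : Type) [AddCommGroup M] [Module (Leavitt k Q) M],
        Module.FinitePresentation (Leavitt k Q) M →
        ∃ P : Submodule (Leavitt k Q) M, Module.Finite (Leavitt k Q) ↥P ∧
          Module.Projective (Leavitt k Q) ↥P ∧ IsFiniteLength (Leavitt k Q) (M ⧸ P)) ∧
    (∀ (M : Type) [AddCommGroup M] [Module (Leavitt k Q) M],
        Module.FinitePresentation (Leavitt k Q) M → IsFiniteLength (Leavitt k Q) M →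
        ∃ X : ModuleOver (PathAlg k Q.rev), FinDimOver k (PathAlg k Q.rev) X ∧
          Nonempty (M ≃ₗ[Leavitt k Q]
            TensorPhi (PathAlg k Q.rev) (Leavitt k Q) (revToLeavitt k Q).toRingHom
              X.carrier)) := by
  refine ⟨?_, ?_, ?_⟩
  · intro N _ _ _ _ _ ℓ r c hc ⟨T, hT, hT'⟩
    subst hT
    exact exists_compSeries (length_series c hc T hT')
  · intro M _ _ hM
    exact part_two M hM
  · intro M _ _ hM hl
    exact part_three M hM hl
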